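/- There exist constants ν₀ ∈ (0,1], C₁ > 0, C₂ ∈ (C₁ν₀, 1) and, for each p ≥ 0, constants c(p), C(p) > 0, all depending only on f and D (and p), such that for every ν ∈ (0,ν₀] and every ℓ in the inertial range J₂ = (C₁ν, C₂], the structure function satisfies c(p) ℓ^p ≤ S_p(ℓ) ≤ C(p) ℓ^p if 0 ≤ p ≤ 1, and c(p) ℓ ≤ S_p(ℓ) ≤ C(p) ℓ if p ≥ 1; moreover for ℓ in the dissipation range J₁ = (0, C₁ν], c(p) ℓ^p ≤ S_p(ℓ) ≤ C(p) ℓ^p if 0 ≤ p ≤ 1 and c(p) ℓ^p ν^{−(p−1)} ≤ S_p(ℓ) ≤ C(p) ℓ^p ν^{−(p−1)} if p ≥ 1. -/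

import Mathlib

open MeasureTheory Set
open scoped ENNReal

/-- The `L^p` norm (on the circle, i.e. over one period `(0,1]`) of the `m`-th
derivative of a function `v : ℝ → ℝ` (identified with a function on `S¹ = ℝ/ℤ`). -/
noncomputable def sobLp (m : ℕ) (p : ℝ≥0∞) (v : ℝ → ℝ) : ℝ :=
  (eLpNorm (iteratedDeriv m v) p (volume.restrict (Ioc (0:ℝ) 1))).toReal

/-- `u` is a smooth, space-periodic, zero-mean-value solution of the generalised
Burgers equation `u_t + f'(u) u_x - ν u_xx = 0` with strongly convex `f` and
nonzero initial condition. -/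
structure IsBurgersSolution (f : ℝ → ℝ) (σ ν : ℝ) (u : ℝ → ℝ → ℝ) : Prop where
  hf : ContDiff ℝ (⊤ : ℕ∞) f
  hσ : 0 < σ
  hconv : ∀ y, σ ≤ iteratedDeriv 2 f y
  hν : 0 < ν
  hu : ContDiffOn ℝ (⊤ : ℕ∞) (Function.uncurry u) (Ici (0:ℝ) ×ˢ univ)
  hper : ∀ t x, u t (x + 1) = u t x
  hpde : ∀ t, 0 < t → ∀ x,
    deriv (fun s => u s x) t + deriv f (u t x) * deriv (u t) x
      - ν * deriv (deriv (u t)) x = 0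
  hmean : ∀ t, 0 ≤ t → ∫ x in Ioc (0:ℝ) 1, u t x = 0
  hinit : ∃ x, u 0 x ≠ 0

/-- The quantity `D = max(|u₀|₁⁻¹, |u₀|_{1,∞})`. -/
noncomputable def burgersD (u : ℝ → ℝ → ℝ) : ℝ :=
  max (sobLp 0 1 (u 0))⁻¹ (sobLp 1 ⊤ (u 0))

/-- `T₁ = D⁻² C̃⁻¹ / 4`. -/
noncomputable def burgersT₁ (D Ct : ℝ) : ℝ := (D ^ 2)⁻¹ * Ct⁻¹ / 4

/-- `T₂ = max(3T₁/2, 2Dσ⁻¹)`. -/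
noncomputable def burgersT₂ (σ D Ct : ℝ) : ℝ :=
  max (3 / 2 * burgersT₁ D Ct) (2 * D * σ⁻¹)

/-- Time average over `[T₁, T₂]`. -/
noncomputable def timeAvg (T₁ T₂ : ℝ) (A : ℝ → ℝ) : ℝ :=
  (T₂ - T₁)⁻¹ * ∫ t in T₁..T₂, A t

/-- The structure function `S_p(ℓ)`. -/
noncomputable def structFun (T₁ T₂ : ℝ) (u : ℝ → ℝ → ℝ) (p ℓ : ℝ) : ℝ :=
  timeAvg T₁ T₂ (fun t => ∫ x in Ioc (0:ℝ) 1, |u t (x + ℓ) - u t x| ^ p)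

/-!
The increment `δ = u(t, x + ℓ) - u(t, x)` is viewed as a random variable on `[T₁, T₂] × S¹`. Maximum
principles for `u_x` and for the flux `ν u_x - f(u)` give `δ ≤ D ℓ` and `|δ| ≲ min(1, ℓ / ν)`. As
`δ` has mean zero, the one-sided bound controls `E|δ|` by `2 D ℓ`, which yields all upper bounds. By
interpolation between moments, all lower bounds follow from the single estimate
`E δ² ≳ ℓ min(1, ℓ / ν)`.

That estimate comes from the correlation `∫ u(x) ∫₀^ℓ u(x + r) dr dx`. Since `ℓ` is small, it is
close to `ℓ ∫ u²`, which drops by a definite multiple of `ℓ` between `T₁`, when little energy has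
been dissipated, and `T₂`, when `|u| ≤ (σ t)⁻¹` has become small. Its time derivative has two
contributions: by periodicity the nonlinear one is an average of the trapezoidal error of `f` over
`[u(x), u(x + ℓ)]`, of size `|δ|³ ≲ |δ|²`, and the viscous one is `ν ∫ u_x δ`.
-/

section Moments

variable {Ω : Type*} [MeasurableSpace Ω] {μ : Measure Ω} {X : Ω → ℝ}

theorem integrable_abs_rpow_of_ae_abs_le [IsFiniteMeasure μ] {M p : ℝ}
    (hX : AEStronglyMeasurable X μ) (hM : ∀ᵐ ω ∂μ, |X ω| ≤ M) (hp : 0 ≤ p) :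
    Integrable (fun ω => |X ω| ^ p) μ := by
  refine .of_bound (C := M ^ p)
    (((continuous_abs.rpow_const fun _ => .inr hp).comp_aestronglyMeasurable hX)) ?_
  filter_upwards [hM] with ω hω
  rw [Real.norm_of_nonneg (by positivity)]
  gcongr

theorem integrable_of_ae_abs_le [IsFiniteMeasure μ] {M : ℝ}
    (hX : AEStronglyMeasurable X μ) (hM : ∀ᵐ ω ∂μ, |X ω| ≤ M) : Integrable X μ :=
  .of_bound hX M hM

theorem abs_le_two_mul_rpow_mul_abs_rpow_sub {a p x : ℝ} (ha : 0 ≤ a) (hp : p ≤ 1) (hxa : x ≤ a) :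
    |x| ≤ 2 * (a ^ (1 - p) * |x| ^ p) - x := by
  rcases le_or_gt x 0 with hx | hx
  · rw [abs_of_nonpos hx]
    linarith [show 0 ≤ a ^ (1 - p) * (-x) ^ p by have := neg_nonneg.2 hx; positivity]
  · have hx_le : x ≤ a ^ (1 - p) * x ^ p := calc
      x = x ^ (1 - p) * x ^ p := by rw [← Real.rpow_add hx]; simp
      _ ≤ a ^ (1 - p) * x ^ p := by gcongr
    rw [abs_of_pos hx]
    linarith

theorem integral_abs_le_two_mul_rpow_mul [IsProbabilityMeasure μ] {a M p : ℝ}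
    (hX : AEStronglyMeasurable X μ) (hM : ∀ᵐ ω ∂μ, |X ω| ≤ M) (hmean : ∫ ω, X ω ∂μ = 0)
    (ha : ∀ᵐ ω ∂μ, X ω ≤ a) (hp : 0 ≤ p) (hp1 : p ≤ 1) :
    ∫ ω, |X ω| ∂μ ≤ 2 * (a ^ (1 - p) * ∫ ω, |X ω| ^ p ∂μ) := by
  have hXi := integrable_of_ae_abs_le hX hM
  have hXp := integrable_abs_rpow_of_ae_abs_le hX hM hp
  have ha0 : 0 ≤ a := by
    simpa [hmean] using integral_mono_ae hXi (integrable_const a) ha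
  calc ∫ ω, |X ω| ∂μ
      ≤ ∫ ω, 2 * (a ^ (1 - p) * |X ω| ^ p) - X ω ∂μ :=
        integral_mono_ae hXi.abs (((hXp.const_mul _).const_mul _).sub hXi)
          (ha.mono fun ω => abs_le_two_mul_rpow_mul_abs_rpow_sub ha0 hp1)
    _ = 2 * (a ^ (1 - p) * ∫ ω, |X ω| ^ p ∂μ) := by
        rw [integral_sub ((hXp.const_mul _).const_mul _) hXi, hmean, integral_const_mul,
          integral_const_mul, sub_zero]

theorem integral_abs_le_two_mul [IsProbabilityMeasure μ] {a M : ℝ}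
    (hX : AEStronglyMeasurable X μ) (hM : ∀ᵐ ω ∂μ, |X ω| ≤ M) (hmean : ∫ ω, X ω ∂μ = 0)
    (ha : ∀ᵐ ω ∂μ, X ω ≤ a) : ∫ ω, |X ω| ∂μ ≤ 2 * a := by
  simpa using integral_abs_le_two_mul_rpow_mul hX hM hmean ha le_rfl zero_le_one

theorem le_integral_abs_of_le_integral_sq [IsFiniteMeasure μ] {b M : ℝ} (hM0 : 0 < M)
    (hX : AEStronglyMeasurable X μ) (hM : ∀ᵐ ω ∂μ, |X ω| ≤ M) (hb : b * M ≤ ∫ ω, X ω ^ 2 ∂μ) :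
    b ≤ ∫ ω, |X ω| ∂μ := by
  have hXi := integrable_of_ae_abs_le hX hM
  refine le_of_mul_le_mul_right (hb.trans ?_) hM0
  rw [← integral_mul_const]
  refine integral_mono_of_nonneg (.of_forall fun ω => sq_nonneg _) (hXi.abs.mul_const M) ?_
  filter_upwards [hM] with ω hω
  rw [← sq_abs, sq]
  gcongr

theorem integral_abs_rpow_le_rpow_integral_abs [IsProbabilityMeasure μ] {M p : ℝ}
    (hX : AEStronglyMeasurable X μ) (hM : ∀ᵐ ω ∂μ, |X ω| ≤ M) (hp : 0 ≤ p) (hp1 : p ≤ 1) :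
    ∫ ω, |X ω| ^ p ∂μ ≤ (∫ ω, |X ω| ∂μ) ^ p :=
  (Real.concaveOn_rpow hp hp1).le_map_integral
    (continuousOn_id.rpow_const fun _ _ => .inr hp) isClosed_Ici
    (.of_forall fun ω => abs_nonneg (X ω)) (integrable_of_ae_abs_le hX hM).abs
    (integrable_abs_rpow_of_ae_abs_le hX hM hp)

theorem integral_abs_rpow_le_rpow_mul_integral_abs [IsFiniteMeasure μ] {M p : ℝ}
    (hX : AEStronglyMeasurable X μ) (hM : ∀ᵐ ω ∂μ, |X ω| ≤ M) (hp : 1 ≤ p) :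
    ∫ ω, |X ω| ^ p ∂μ ≤ M ^ (p - 1) * ∫ ω, |X ω| ∂μ := by
  rw [← integral_const_mul]
  refine integral_mono_of_nonneg (.of_forall fun ω => by positivity)
    ((integrable_of_ae_abs_le hX hM).abs.const_mul _) ?_
  filter_upwards [hM] with ω hω
  calc |X ω| ^ p = |X ω| ^ (p - 1) * |X ω| := by
        rw [← Real.rpow_add_one' (abs_nonneg _) (by linarith), sub_add_cancel]
    _ ≤ M ^ (p - 1) * |X ω| := by gcongr

theorem sq_le_mul_add_rpow_add_rpow_mul_rpow {y r M p : ℝ} (hy : 0 ≤ y) (hyM : y ≤ M) (hr : 0 < r) :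
    y ^ 2 ≤ r * y + (r ^ (2 - p) + M ^ (2 - p)) * y ^ p := by
  have hM0 : 0 ≤ M := hy.trans hyM
  rcases le_or_gt y r with hyr | hyr
  · have : 0 ≤ (r ^ (2 - p) + M ^ (2 - p)) * y ^ p := by positivity
    nlinarith
  · have hy0 : 0 < y := hr.trans hyr
    have h_rpow : y ^ (2 - p) ≤ r ^ (2 - p) + M ^ (2 - p) := by
      rcases le_total p 2 with hp2 | hp2
      · have := Real.rpow_le_rpow hy0.le hyM (sub_nonneg.2 hp2)
        have : 0 ≤ r ^ (2 - p) := by positivity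
        linarith
      · have := Real.rpow_le_rpow_of_nonpos hr hyr.le (sub_nonpos.2 hp2)
        have : 0 ≤ M ^ (2 - p) := by positivity
        linarith
    calc y ^ 2 = y ^ (2 - p) * y ^ p := by rw [← Real.rpow_add hy0]; simp
      _ ≤ (r ^ (2 - p) + M ^ (2 - p)) * y ^ p := by gcongr
      _ ≤ r * y + (r ^ (2 - p) + M ^ (2 - p)) * y ^ p := by
        linarith [show 0 ≤ r * y by positivity]

theorem integral_sq_le_mul_add_mul_integral_abs_rpow [IsFiniteMeasure μ] {M p r : ℝ} (hr : 0 < r)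
    (hX : AEStronglyMeasurable X μ) (hM : ∀ᵐ ω ∂μ, |X ω| ≤ M) (hp : 1 ≤ p) :
    ∫ ω, X ω ^ 2 ∂μ ≤ r * (∫ ω, |X ω| ∂μ) +
      (r ^ (2 - p) + M ^ (2 - p)) * ∫ ω, |X ω| ^ p ∂μ := by
  have hXi := (integrable_of_ae_abs_le hX hM).abs.const_mul r
  have hXp := (integrable_abs_rpow_of_ae_abs_le hX hM (zero_le_one.trans hp)).const_mul
    (r ^ (2 - p) + M ^ (2 - p))
  rw [← integral_const_mul, ← integral_const_mul, ← integral_add hXi hXp]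
  refine integral_mono_of_nonneg (.of_forall fun ω => sq_nonneg _) (hXi.add hXp) ?_
  filter_upwards [hM] with ω hω
  rw [← sq_abs]
  exact sq_le_mul_add_rpow_add_rpow_mul_rpow (abs_nonneg _) hω hr

theorem integral_abs_rpow_le_two_mul_rpow [IsProbabilityMeasure μ] {A B p : ℝ}
    (hX : AEStronglyMeasurable X μ) (hXB : ∀ᵐ ω ∂μ, |X ω| ≤ B) (hmean : ∫ ω, X ω ∂μ = 0)
    (hXA : ∀ᵐ ω ∂μ, X ω ≤ A) (hp : 0 ≤ p) (hp1 : p ≤ 1) :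
    ∫ ω, |X ω| ^ p ∂μ ≤ (2 * A) ^ p :=
  (integral_abs_rpow_le_rpow_integral_abs hX hXB hp hp1).trans <|
    Real.rpow_le_rpow (integral_nonneg fun _ => abs_nonneg _)
      (integral_abs_le_two_mul hX hXB hmean hXA) hp

theorem mul_rpow_le_integral_abs_rpow [IsProbabilityMeasure μ] {θ A B p : ℝ} (hA : 0 < A)
    (hB : 0 < B) (hX : AEStronglyMeasurable X μ) (hXB : ∀ᵐ ω ∂μ, |X ω| ≤ B)
    (hmean : ∫ ω, X ω ∂μ = 0) (hXA : ∀ᵐ ω ∂μ, X ω ≤ A) (hsq : θ * (A * B) ≤ ∫ ω, X ω ^ 2 ∂μ)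
    (hp : 0 ≤ p) (hp1 : p ≤ 1) : θ / 2 * A ^ p ≤ ∫ ω, |X ω| ^ p ∂μ := by
  have h_first : θ * A ≤ 2 * (A ^ (1 - p) * ∫ ω, |X ω| ^ p ∂μ) :=
    (le_integral_abs_of_le_integral_sq hB hX hXB (by rwa [mul_assoc])).trans
      (integral_abs_le_two_mul_rpow_mul hX hXB hmean hXA hp hp1)
  have hA_split : A ^ (1 - p) * A ^ p = A := by rw [← Real.rpow_add hA]; simp
  refine le_of_mul_le_mul_left ?_ (show 0 < A ^ (1 - p) by positivity)
  linear_combination h_first / 2 + θ / 2 * hA_split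

theorem integral_abs_rpow_le_two_mul_mul_rpow [IsProbabilityMeasure μ] {A B p : ℝ}
    (hB : 0 ≤ B) (hX : AEStronglyMeasurable X μ) (hXB : ∀ᵐ ω ∂μ, |X ω| ≤ B)
    (hmean : ∫ ω, X ω ∂μ = 0) (hXA : ∀ᵐ ω ∂μ, X ω ≤ A) (hp : 1 ≤ p) :
    ∫ ω, |X ω| ^ p ∂μ ≤ 2 * (A * B ^ (p - 1)) := calc
  ∫ ω, |X ω| ^ p ∂μ ≤ B ^ (p - 1) * ∫ ω, |X ω| ∂μ :=
    integral_abs_rpow_le_rpow_mul_integral_abs hX hXB hp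
  _ ≤ B ^ (p - 1) * (2 * A) := by gcongr; exact integral_abs_le_two_mul hX hXB hmean hXA
  _ = 2 * (A * B ^ (p - 1)) := by ring

theorem mul_mul_rpow_le_integral_abs_rpow [IsProbabilityMeasure μ] {θ A B p : ℝ} (hθ : 0 < θ)
    (hB : 0 < B) (hX : AEStronglyMeasurable X μ) (hXB : ∀ᵐ ω ∂μ, |X ω| ≤ B)
    (hmean : ∫ ω, X ω ∂μ = 0) (hXA : ∀ᵐ ω ∂μ, X ω ≤ A) (hsq : θ * (A * B) ≤ ∫ ω, X ω ^ 2 ∂μ)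
    (hp : 1 ≤ p) :
    θ / 2 / ((θ / 4) ^ (2 - p) + 1) * (A * B ^ (p - 1)) ≤ ∫ ω, |X ω| ^ p ∂μ := by
  set E := ∫ ω, |X ω| ^ p ∂μ
  set k := (θ / 4) ^ (2 - p) + 1
  have hk : 0 < k := by positivity
  have h_interp : θ * (A * B) ≤ θ / 4 * B * (2 * A) + k * B ^ (2 - p) * E := calc
    θ * (A * B)
      ≤ θ / 4 * B * (∫ ω, |X ω| ∂μ) + ((θ / 4 * B) ^ (2 - p) + B ^ (2 - p)) * E :=
        hsq.trans (integral_sq_le_mul_add_mul_integral_abs_rpow (by positivity) hX hXB hp)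
    _ = θ / 4 * B * (∫ ω, |X ω| ∂μ) + k * B ^ (2 - p) * E := by
        rw [Real.mul_rpow (by positivity) hB.le]; ring
    _ ≤ θ / 4 * B * (2 * A) + k * B ^ (2 - p) * E := by
        gcongr; exact integral_abs_le_two_mul hX hXB hmean hXA
  have hB_split : B ^ (2 - p) * B ^ (p - 1) = B := by
    rw [← Real.rpow_add hB]; norm_num
  rw [div_mul_eq_mul_div, div_le_iff₀ hk]
  refine le_of_mul_le_mul_left ?_ (show 0 < B ^ (2 - p) by positivity)
  linear_combination h_interp + θ / 2 * A * hB_split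

end Moments

/-- The partial derivative in the space variable `x` of a function of `(t, x)`, written `∂ₓ w`. -/
noncomputable def spaceDeriv {E : Type*} (w : E → ℝ → ℝ) (t : E) (x : ℝ) : ℝ := deriv (w t) x

local notation "∂ₓ" => spaceDeriv

section SpaceTime

variable {E : Type*} {s : Set E} {w : E → ℝ → ℝ}

theorem periodic_spaceDeriv {c : ℝ} {t : E} (hw : Function.Periodic (w t) c) :
    Function.Periodic (∂ₓ w t) c := fun x => by
  rw [spaceDeriv, spaceDeriv, ← deriv_comp_add_const, funext hw]

theorem spaceDeriv_mul_left (a : E → ℝ) (w : E → ℝ → ℝ) :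
    ∂ₓ (fun t x => a t * w t x) = fun t x => a t * ∂ₓ w t x := by
  ext t x
  simp only [spaceDeriv, deriv_const_mul_field]

theorem continuous_slice [TopologicalSpace E] (hw : ContinuousOn (Function.uncurry w) (s ×ˢ univ))
    {t : E} (ht : t ∈ s) : Continuous (w t) :=
  hw.comp_continuous (f := fun x => (t, x)) (by fun_prop) fun x => ⟨ht, mem_univ x⟩

theorem continuousOn_comp_space [TopologicalSpace E] {g : ℝ → ℝ} (hg : Continuous g)
    (hw : ContinuousOn (Function.uncurry w) (s ×ˢ univ)) :
    ContinuousOn (Function.uncurry fun t x => w t (g x)) (s ×ˢ univ) :=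
  hw.comp (f := fun q : E × ℝ => (q.1, g q.2)) (by fun_prop) fun q hq => ⟨hq.1, mem_univ _⟩

theorem continuousOn_increment [TopologicalSpace E]
    (hw : ContinuousOn (Function.uncurry w) (s ×ˢ univ)) (ℓ : ℝ) :
    ContinuousOn (Function.uncurry fun t x => w t (x + ℓ) - w t x) (s ×ˢ univ) :=
  (continuousOn_comp_space (g := fun x => x + ℓ) (by fun_prop) hw).sub hw

theorem continuousOn_intervalIntegral [TopologicalSpace E] (a b : ℝ)
    (hw : ContinuousOn (Function.uncurry w) (s ×ˢ univ)) :
    ContinuousOn (fun t => ∫ x in a..b, w t x) s := by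
  rw [continuousOn_iff_continuous_domRestrict]
  refine intervalIntegral.continuous_parametric_intervalIntegral_of_continuous'
    (f := fun (t : s) x => w t x) ?_ a b
  exact hw.comp_continuous (f := fun q : s × ℝ => ((q.1 : E), q.2)) (by fun_prop)
    fun q => ⟨q.1.2, mem_univ _⟩

variable [NormedAddCommGroup E] [NormedSpace ℝ E]

theorem contDiff_slice {n : WithTop ℕ∞} (hw : ContDiffOn ℝ n (Function.uncurry w) (s ×ˢ univ))
    {t : E} (ht : t ∈ s) : ContDiff ℝ n (w t) := by
  rw [← contDiffOn_univ]
  exact hw.comp (f := fun x => (t, x)) (by fun_prop) fun x _ => ⟨ht, mem_univ x⟩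

theorem contDiffOn_spaceDeriv {m n : WithTop ℕ∞} (hs : UniqueDiffOn ℝ s)
    (hw : ContDiffOn ℝ n (Function.uncurry w) (s ×ˢ univ)) (hmn : m + 1 ≤ n) :
    ContDiffOn ℝ m (Function.uncurry (∂ₓ w)) (s ×ˢ univ) := by
  have h_fderiv : ContDiffOn ℝ m
      (fun q => fderivWithin ℝ (Function.uncurry w) (s ×ˢ univ) q ((0 : E), (1 : ℝ)))
      (s ×ˢ univ) :=
    (hw.fderivWithin (hs.prod uniqueDiffOn_univ) hmn).clm_apply contDiffOn_const
  refine h_fderiv.congr ?_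
  rintro ⟨t, x⟩ ⟨ht, _⟩
  have hn : n ≠ 0 := by rintro rfl; simp at hmn
  have h_within := ((hw.differentiableOn hn) (t, x) ⟨ht, mem_univ x⟩).hasFDerivWithinAt
  have h_line : HasDerivAt (fun y : ℝ => (t, y)) ((0 : E), (1 : ℝ)) x :=
    (hasDerivAt_const x t).prodMk (hasDerivAt_id x)
  exact ((h_within.comp_hasDerivWithinAt (s := univ) x h_line.hasDerivWithinAt
    fun y _ => ⟨ht, mem_univ y⟩).hasDerivAt Filter.univ_mem).deriv

end SpaceTime

section Time

variable {w : ℝ → ℝ → ℝ}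

theorem hasDerivAt_slice_left {G : Type*} [NormedAddCommGroup G] [NormedSpace ℝ G] {F : ℝ × ℝ → G}
    {F' : ℝ × ℝ →L[ℝ] G} {t x : ℝ} (hF : HasFDerivAt F F' (t, x)) :
    HasDerivAt (fun s => F (s, x)) (F' (1, 0)) t :=
  hF.comp_hasDerivAt t ((hasDerivAt_id t).prodMk (hasDerivAt_const t x))

theorem hasDerivAt_slice_right {G : Type*} [NormedAddCommGroup G] [NormedSpace ℝ G]
    {F : ℝ × ℝ → G} {F' : ℝ × ℝ →L[ℝ] G} {t x : ℝ} (hF : HasFDerivAt F F' (t, x)) :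
    HasDerivAt (fun y => F (t, y)) (F' (0, 1)) x :=
  hF.comp_hasDerivAt x ((hasDerivAt_const x t).prodMk (hasDerivAt_id x))

theorem hasDerivAt_spaceDeriv_of_contDiffAt {v : ℝ → ℝ} {t x : ℝ}
    (hw : ContDiffAt ℝ 2 (Function.uncurry w) (t, x))
    (hv : ∀ᶠ y in nhds x, HasDerivAt (fun s => w s y) (v y) t) :
    HasDerivAt (fun s => ∂ₓ w s x) (deriv v x) t := by
  set F := Function.uncurry w
  have h_diff : ∀ᶠ q in nhds (t, x), DifferentiableAt ℝ F q :=
    (hw.eventually (by simp)).mono fun q hq => hq.differentiableAt two_ne_zero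
  have h_fderiv : HasFDerivAt (fderiv ℝ F) (fderiv ℝ (fderiv ℝ F) (t, x)) (t, x) :=
    ((hw.fderiv_right (m := 1) (by norm_num)).differentiableAt one_ne_zero).hasFDerivAt
  have h_xt : HasDerivAt v (fderiv ℝ (fderiv ℝ F) (t, x) (0, 1) (1, 0)) x := by
    refine ((hasDerivAt_slice_right h_fderiv).clm_apply
      (hasDerivAt_const x ((1 : ℝ), (0 : ℝ)))).congr_of_eventuallyEq ?_ |>.congr_deriv (by simp)
    filter_upwards [hv, (Continuous.prodMk_right t).continuousAt.eventually h_diff] with y hvy hy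
    exact hvy.unique (hasDerivAt_slice_left (F := F) hy.hasFDerivAt)
  have h_tx : HasDerivAt (fun s => ∂ₓ w s x) (fderiv ℝ (fderiv ℝ F) (t, x) (1, 0) (0, 1)) t := by
    refine ((hasDerivAt_slice_left h_fderiv).clm_apply
      (hasDerivAt_const t ((0 : ℝ), (1 : ℝ)))).congr_of_eventuallyEq ?_ |>.congr_deriv (by simp)
    filter_upwards [(Continuous.prodMk_left x).continuousAt.eventually h_diff] with s hs
    exact (hasDerivAt_slice_right (F := F) hs.hasFDerivAt).deriv
  have h_symm : IsSymmSndFDerivAt ℝ F (t, x) := hw.isSymmSndFDerivAt (by simp)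
  rwa [h_xt.deriv, h_symm]

theorem hasDerivAt_intervalIntegral_of_continuousOn {w' : ℝ → ℝ → ℝ} {S : Set ℝ} {t : ℝ}
    (a b : ℝ) (hS : S ∈ nhds t) (hw : ContinuousOn (Function.uncurry w) (S ×ˢ univ))
    (hw' : ContinuousOn (Function.uncurry w') (S ×ˢ univ))
    (h_deriv : ∀ᶠ s in nhds t, ∀ x, HasDerivAt (fun r => w r x) (w' s x) s) :
    HasDerivAt (fun s => ∫ x in a..b, w s x) (∫ x in a..b, w' t x) t := by
  obtain ⟨K, hKt, hKS, hK⟩ := local_compact_nhds (Filter.inter_mem hS h_deriv)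
  obtain ⟨B, hB⟩ := (hK.prod isCompact_uIcc).exists_bound_of_continuousOn
    (hw'.mono (prod_mono (fun s hs => (hKS hs).1) (subset_univ (uIcc a b))))
  have ht := mem_of_mem_nhds hS
  refine (intervalIntegral.hasDerivAt_integral_of_dominated_loc_of_deriv_le hKt
    (bound := fun _ => B) ?_ ((continuous_slice hw ht).intervalIntegrable _ _)
    (continuous_slice hw' ht).aestronglyMeasurable ?_ intervalIntegrable_const ?_).2
  · filter_upwards [hS] with s hs using (continuous_slice hw hs).aestronglyMeasurable
  · exact .of_forall fun x hx s hs => hB (s, x) ⟨hs, uIoc_subset_uIcc hx⟩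
  · exact .of_forall fun x _ s hs => (hKS hs).2 x

end Time

section MaximumPrinciple

theorem deriv_deriv_nonpos_of_isLocalMax {g : ℝ → ℝ} {x : ℝ} (hmax : IsLocalMax g x)
    (hg : ContinuousAt g x) : deriv (deriv g) x ≤ 0 := by
  by_contra! h_pos
  have h_const : g =ᶠ[nhds x] fun _ => g x := by
    filter_upwards [hmax, isLocalMin_of_deriv_deriv_pos h_pos hmax.deriv_eq_zero hg]
      with y hy hy' using le_antisymm hy hy'
  have := h_const.deriv.deriv_eq
  simp_all

theorem deriv_nonneg_of_isMaxOn_Icc_right {g : ℝ → ℝ} {a t : ℝ} (hat : a < t)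
    (hmax : IsMaxOn g (Icc a t) t) (hg : DifferentiableAt ℝ g t) : 0 ≤ deriv g t := by
  have h_cone : a - t ∈ posTangentConeAt (Icc a t) t :=
    sub_mem_posTangentConeAt_of_segment_subset
      ((convex_Icc a t).segment_subset (right_mem_Icc.2 hat.le) (left_mem_Icc.2 hat.le))
  have h_dir := hmax.localize.hasFDerivWithinAt_nonpos
    hg.hasDerivAt.hasFDerivAt.hasFDerivWithinAt h_cone
  simp only [ContinuousLinearMap.toSpanSingleton_apply, smul_eq_mul] at h_dir
  nlinarith

variable {φ : ℝ → ℝ → ℝ} {c M T : ℝ}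

theorem le_of_deriv_neg_at_space_max (hc : 0 < c)
    (hφ : ContinuousOn (Function.uncurry φ) (Ici 0 ×ˢ univ))
    (hper : ∀ t, Function.Periodic (φ t) c) (hinit : ∀ x, φ 0 x ≤ M)
    (hdiff : ∀ t, 0 < t → ∀ x, DifferentiableAt ℝ (fun s => φ s x) t)
    (hneg : ∀ t, 0 < t → ∀ x, M < φ t x → ∂ₓ φ t x = 0 → ∂ₓ (∂ₓ φ) t x ≤ 0 →
      deriv (fun s => φ s x) t < 0) (hT : 0 ≤ T) (x : ℝ) : φ T x ≤ M := by
  obtain ⟨⟨t₀, x₀⟩, ⟨ht₀, -⟩, hmax⟩ :=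
    (isCompact_Icc.prod isCompact_Icc : IsCompact (Icc 0 T ×ˢ Icc 0 c)).exists_isMaxOn
      ⟨(0, 0), left_mem_Icc.2 hT, left_mem_Icc.2 hc.le⟩
      (hφ.mono (prod_mono Icc_subset_Ici_self (subset_univ _)))
  have h_le : ∀ t ∈ Icc 0 T, ∀ y, φ t y ≤ φ t₀ x₀ := fun t ht y => by
    obtain ⟨z, hz, hyz⟩ := (hper t).exists_mem_Ico₀ hc y
    rw [hyz]
    exact hmax (a := (t, z)) ⟨ht, Ico_subset_Icc_self hz⟩
  refine (h_le T (right_mem_Icc.2 hT) x).trans ?_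
  by_contra! h_gt
  have ht₀_pos : 0 < t₀ := ht₀.1.lt_of_ne (by rintro rfl; exact h_gt.not_ge (hinit x₀))
  have h_space : IsLocalMax (φ t₀) x₀ := .of_forall (h_le t₀ ht₀)
  have h_time : IsMaxOn (fun s => φ s x₀) (Icc 0 t₀) t₀ :=
    fun s hs => h_le s ⟨hs.1, hs.2.trans ht₀.2⟩ x₀
  exact (hneg t₀ ht₀_pos x₀ h_gt h_space.deriv_eq_zero
    (deriv_deriv_nonpos_of_isLocalMax h_space (continuous_slice hφ ht₀.1).continuousAt)).not_ge
    (deriv_nonneg_of_isMaxOn_Icc_right ht₀_pos h_time (hdiff t₀ ht₀_pos x₀))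

theorem le_of_deriv_nonpos_at_space_max (hc : 0 < c)
    (hφ : ContinuousOn (Function.uncurry φ) (Ici 0 ×ˢ univ))
    (hper : ∀ t, Function.Periodic (φ t) c) (hinit : ∀ x, φ 0 x ≤ M)
    (hdiff : ∀ t, 0 < t → ∀ x, DifferentiableAt ℝ (fun s => φ s x) t)
    (hnonpos : ∀ t, 0 < t → ∀ x, M < φ t x → ∂ₓ φ t x = 0 → ∂ₓ (∂ₓ φ) t x ≤ 0 →
      deriv (fun s => φ s x) t ≤ 0) (hT : 0 ≤ T) (x : ℝ) : φ T x ≤ M := by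
  refine le_of_forall_pos_le_add fun ε hε => ?_
  have hδ : 0 < ε / (T + 1) := by positivity
  have h_perturbed : φ T x - ε / (T + 1) * T ≤ M := by
    refine le_of_deriv_neg_at_space_max (φ := fun t y => φ t y - ε / (T + 1) * t) hc
      (hφ.sub (by fun_prop)) (fun t y => by simp only [hper t y]) (by simpa using hinit)
      (fun t ht y => (hdiff t ht y).sub (by fun_prop)) (fun t ht y h_gt h_dx h_dxx => ?_) hT x
    have h_dt : deriv (fun s => φ s y - ε / (T + 1) * s) t =
        deriv (fun s => φ s y) t - ε / (T + 1) := by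
      rw [deriv_fun_sub (hdiff t ht y) (by fun_prop)]
      simp
    have h_dφ : ∂ₓ (fun t y => φ t y - ε / (T + 1) * t) = ∂ₓ φ := by
      ext t y; simp [spaceDeriv]
    rw [h_dφ] at h_dx h_dxx
    have := hnonpos t ht y (by nlinarith) h_dx h_dxx
    linarith
  have : ε / (T + 1) * T ≤ ε := by
    rw [div_mul_eq_mul_div, div_le_iff₀ (by positivity)]
    nlinarith
  linarith

end MaximumPrinciple

theorem abs_le_mul_of_deriv_le_of_integral_eq_zero {v : ℝ → ℝ} {a c B : ℝ} (hc : 0 < c)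
    (hv : Differentiable ℝ v) (hper : Function.Periodic v c) (hmean : ∫ y in a..a + c, v y = 0)
    (hB : ∀ y, deriv v y ≤ B) (x : ℝ) : |v x| ≤ B * c := by
  obtain ⟨z, -, hz⟩ := exists_eq_interval_average (a := a) (b := a + c) (by linarith)
    hv.continuous.continuousOn
  replace hz : v z = 0 := by rw [hz, interval_average_eq, hmean, smul_zero]
  have hB0 : 0 ≤ B := by
    have := image_sub_le_mul_sub_of_deriv_le hv hB (show z ≤ z + c by linarith)
    rw [hper z, sub_self, add_sub_cancel_left] at this
    exact nonneg_of_mul_nonneg_left this hc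
  obtain ⟨l, hl, hzl⟩ := hper.exists_mem_Ioc hc z (x - c)
  obtain ⟨r, hr, hzr⟩ := hper.exists_mem_Ioc hc z x
  rw [sub_add_cancel] at hl
  have h_left := image_sub_le_mul_sub_of_deriv_le hv hB hl.2
  have h_right := image_sub_le_mul_sub_of_deriv_le hv hB hr.1.le
  rw [← hzl, hz] at h_left
  rw [← hzr, hz] at h_right
  rw [abs_le]
  constructor <;> nlinarith [hl.1, hr.2]

section SobolevNorms

instance isProbabilityMeasure_restrict_Ioc_zero_one :
    IsProbabilityMeasure (volume.restrict (Ioc (0 : ℝ) 1)) := ⟨by simp⟩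

variable {m : ℕ} {v : ℝ → ℝ}

theorem memLp_restrict_Ioc_of_continuous {w : ℝ → ℝ} (hw : Continuous w) (a b : ℝ) (p : ℝ≥0∞) :
    MemLp w p (volume.restrict (Ioc a b)) := by
  obtain ⟨B, hB⟩ := isCompact_Icc.exists_bound_of_continuousOn hw.continuousOn (s := Icc a b)
  refine .of_bound hw.aestronglyMeasurable B ?_
  filter_upwards [ae_restrict_mem measurableSet_Ioc] with y hy using hB y (Ioc_subset_Icc_self hy)

theorem sobLp_mono {p q : ℝ≥0∞} (hv : Continuous (iteratedDeriv m v)) (hpq : p ≤ q) :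
    sobLp m p v ≤ sobLp m q v :=
  ENNReal.toReal_mono (memLp_restrict_Ioc_of_continuous hv 0 1 q).eLpNorm_ne_top
    (eLpNorm_le_eLpNorm_of_exponent_le hpq hv.aestronglyMeasurable)

theorem sobLp_rpow_toReal {p : ℝ≥0∞} (hp : p ≠ 0) (hp_top : p ≠ ∞)
    (hv : Continuous (iteratedDeriv m v)) :
    sobLp m p v ^ p.toReal = ∫ x in (0 : ℝ)..1, |iteratedDeriv m v x| ^ p.toReal := by
  rw [sobLp, toReal_eLpNorm hv.aestronglyMeasurable,
    lpNorm_eq_integral_norm_rpow_toReal hp hp_top hv.aestronglyMeasurable,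
    intervalIntegral.integral_of_le zero_le_one,
    Real.rpow_inv_rpow (integral_nonneg fun _ => by positivity)
      (ENNReal.toReal_ne_zero.2 ⟨hp, hp_top⟩)]
  simp only [Real.norm_eq_abs]

theorem sobLp_one (hv : Continuous (iteratedDeriv m v)) :
    sobLp m 1 v = ∫ x in (0 : ℝ)..1, |iteratedDeriv m v x| := by
  simpa using sobLp_rpow_toReal one_ne_zero ENNReal.one_ne_top hv

theorem sobLp_two_sq (hv : Continuous (iteratedDeriv m v)) :
    sobLp m 2 v ^ 2 = ∫ x in (0 : ℝ)..1, iteratedDeriv m v x ^ 2 := by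
  simpa using sobLp_rpow_toReal two_ne_zero ENNReal.ofNat_ne_top hv

theorem abs_iteratedDeriv_le_sobLp_top (hv : Continuous (iteratedDeriv m v))
    (hper : Function.Periodic (iteratedDeriv m v) 1) (x : ℝ) :
    |iteratedDeriv m v x| ≤ sobLp m ∞ v := by
  set w := iteratedDeriv m v
  have h_ae : ∀ᵐ y ∂volume.restrict (Ioc (0 : ℝ) 1), |w y| ≤ sobLp m ∞ v := by
    filter_upwards [ae_le_eLpNormEssSup (f := w) (μ := volume.restrict (Ioc (0 : ℝ) 1))] with y hy
    rw [← eLpNorm_exponent_top] at hy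
    simpa [sobLp] using
      ENNReal.toReal_mono (memLp_restrict_Ioc_of_continuous hv 0 1 ∞).eLpNorm_ne_top hy
  have h_all : EqOn (fun y => min |w y| (sobLp m ∞ v)) (fun y => |w y|) (Ioc 0 1) :=
    Measure.eqOn_Ioc_of_ae_eq volume (h_ae.mono fun y hy => min_eq_left hy)
      (by fun_prop) (by fun_prop)
  obtain ⟨y, hy, hxy⟩ := hper.exists_mem_Ioc one_pos x 0
  rw [hxy]
  exact min_eq_left_iff.1 (h_all (by simpa using hy))

end SobolevNorms

/-- The flux `g = ν u_x - f(u)` of the Burgers equation, with the sign for which the equation reads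
`u_t = ∂ₓ g`. -/
noncomputable def burgersFlux (f : ℝ → ℝ) (ν : ℝ) (u : ℝ → ℝ → ℝ) (t x : ℝ) : ℝ :=
  ν * ∂ₓ u t x - f (u t x)

namespace IsBurgersSolution

variable {f : ℝ → ℝ} {σ ν t : ℝ} {u : ℝ → ℝ → ℝ}

theorem contDiffOn_dx (h : IsBurgersSolution f σ ν u) :
    ContDiffOn ℝ (⊤ : ℕ∞) (Function.uncurry (∂ₓ u)) (Ici 0 ×ˢ univ) :=
  contDiffOn_spaceDeriv (uniqueDiffOn_Ici 0) h.hu (by simp)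

theorem contDiffOn_dxx (h : IsBurgersSolution f σ ν u) :
    ContDiffOn ℝ (⊤ : ℕ∞) (Function.uncurry (∂ₓ (∂ₓ u))) (Ici 0 ×ˢ univ) :=
  contDiffOn_spaceDeriv (uniqueDiffOn_Ici 0) h.contDiffOn_dx (by simp)

theorem contDiffOn_flux (h : IsBurgersSolution f σ ν u) :
    ContDiffOn ℝ (⊤ : ℕ∞) (Function.uncurry (burgersFlux f ν u)) (Ici 0 ×ˢ univ) :=
  (contDiffOn_const.mul h.contDiffOn_dx).sub (h.hf.comp_contDiffOn h.hu)

theorem contDiffOn_dx_flux (h : IsBurgersSolution f σ ν u) :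
    ContDiffOn ℝ (⊤ : ℕ∞) (Function.uncurry (∂ₓ (burgersFlux f ν u))) (Ici 0 ×ˢ univ) :=
  contDiffOn_spaceDeriv (uniqueDiffOn_Ici 0) h.contDiffOn_flux (by simp)

theorem hasDerivAt_space (h : IsBurgersSolution f σ ν u) (ht : 0 ≤ t) (x : ℝ) :
    HasDerivAt (u t) (∂ₓ u t x) x :=
  ((contDiff_slice h.hu ht).differentiable (by simp) x).hasDerivAt

theorem hasDerivAt_space_dx (h : IsBurgersSolution f σ ν u) (ht : 0 ≤ t) (x : ℝ) :
    HasDerivAt (∂ₓ u t) (∂ₓ (∂ₓ u) t x) x :=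
  ((contDiff_slice h.contDiffOn_dx ht).differentiable (by simp) x).hasDerivAt

theorem hasDerivAt_space_flux (h : IsBurgersSolution f σ ν u) (ht : 0 ≤ t) (x : ℝ) :
    HasDerivAt (burgersFlux f ν u t) (∂ₓ (burgersFlux f ν u) t x) x :=
  ((contDiff_slice h.contDiffOn_flux ht).differentiable (by simp) x).hasDerivAt

theorem hasDerivAt_f (h : IsBurgersSolution f σ ν u) (y : ℝ) : HasDerivAt f (deriv f y) y :=
  (h.hf.differentiable (by simp) y).hasDerivAt

theorem hasDerivAt_deriv_f (h : IsBurgersSolution f σ ν u) (y : ℝ) :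
    HasDerivAt (deriv f) (iteratedDeriv 2 f y) y := by
  rw [iteratedDeriv_succ, iteratedDeriv_one]
  exact ((contDiff_infty_iff_deriv.1 h.hf).2.differentiable (by simp) y).hasDerivAt

theorem dx_flux (h : IsBurgersSolution f σ ν u) (ht : 0 ≤ t) (x : ℝ) :
    ∂ₓ (burgersFlux f ν u) t x = ν * ∂ₓ (∂ₓ u) t x - deriv f (u t x) * ∂ₓ u t x :=
  (((h.hasDerivAt_space_dx ht x).const_mul ν).sub
    ((h.hasDerivAt_f (u t x)).comp x (h.hasDerivAt_space ht x))).deriv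

theorem dxx_flux (h : IsBurgersSolution f σ ν u) (ht : 0 ≤ t) (x : ℝ) :
    ∂ₓ (∂ₓ (burgersFlux f ν u)) t x = ν * ∂ₓ (∂ₓ (∂ₓ u)) t x -
      (iteratedDeriv 2 f (u t x) * ∂ₓ u t x * ∂ₓ u t x + deriv f (u t x) * ∂ₓ (∂ₓ u) t x) := by
  have h_dxx : HasDerivAt (∂ₓ (∂ₓ u) t) (∂ₓ (∂ₓ (∂ₓ u)) t x) x :=
    ((contDiff_slice h.contDiffOn_dxx ht).differentiable (by simp) x).hasDerivAt
  rw [spaceDeriv, funext (h.dx_flux ht)]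
  exact ((h_dxx.const_mul ν).sub (((h.hasDerivAt_deriv_f (u t x)).comp x
    (h.hasDerivAt_space ht x)).mul (h.hasDerivAt_space_dx ht x))).deriv

theorem contDiffAt (h : IsBurgersSolution f σ ν u) (ht : 0 < t) (x : ℝ) :
    ContDiffAt ℝ (⊤ : ℕ∞) (Function.uncurry u) (t, x) :=
  h.hu.contDiffAt (prod_mem_nhds (Ici_mem_nhds ht) Filter.univ_mem)

theorem hasDerivAt_time (h : IsBurgersSolution f σ ν u) (ht : 0 < t) (x : ℝ) :
    HasDerivAt (fun s => u s x) (∂ₓ (burgersFlux f ν u) t x) t := by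
  have h_diff : DifferentiableAt ℝ (fun s => u s x) t :=
    (hasDerivAt_slice_left ((h.contDiffAt ht x).differentiableAt (by simp)).hasFDerivAt
      ).differentiableAt
  refine h_diff.hasDerivAt.congr_deriv ?_
  rw [h.dx_flux ht.le]
  have h_pde : deriv (fun s => u s x) t + deriv f (u t x) * ∂ₓ u t x - ν * ∂ₓ (∂ₓ u) t x = 0 :=
    h.hpde t ht x
  linear_combination h_pde

theorem hasDerivAt_time_dx (h : IsBurgersSolution f σ ν u) (ht : 0 < t) (x : ℝ) :
    HasDerivAt (fun s => ∂ₓ u s x) (∂ₓ (∂ₓ (burgersFlux f ν u)) t x) t :=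
  hasDerivAt_spaceDeriv_of_contDiffAt ((h.contDiffAt ht x).of_le (by norm_cast))
    (.of_forall fun y => h.hasDerivAt_time ht y)

theorem hasDerivAt_time_flux (h : IsBurgersSolution f σ ν u) (ht : 0 < t) (x : ℝ) :
    HasDerivAt (fun s => burgersFlux f ν u s x)
      (ν * ∂ₓ (∂ₓ (burgersFlux f ν u)) t x
        - deriv f (u t x) * ∂ₓ (burgersFlux f ν u) t x) t :=
  ((h.hasDerivAt_time_dx ht x).const_mul ν).sub
    ((h.hasDerivAt_f (u t x)).comp t (h.hasDerivAt_time ht x))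

theorem periodic_dx (h : IsBurgersSolution f σ ν u) (t : ℝ) : Function.Periodic (∂ₓ u t) 1 :=
  periodic_spaceDeriv (h.hper t)

theorem periodic_flux (h : IsBurgersSolution f σ ν u) (t : ℝ) :
    Function.Periodic (burgersFlux f ν u t) 1 := fun x => by
  rw [burgersFlux, burgersFlux, h.hper, h.periodic_dx]

theorem intervalIntegral_eq_zero (h : IsBurgersSolution f σ ν u) (ht : 0 ≤ t) :
    ∫ x in (0 : ℝ)..1, u t x = 0 := by
  rw [intervalIntegral.integral_of_le zero_le_one, h.hmean t ht]

theorem dxx_flux_le (h : IsBurgersSolution f σ ν u) (ht : 0 ≤ t) {x : ℝ}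
    (h_dxx : ∂ₓ (∂ₓ u) t x = 0) (h_dxxx : ∂ₓ (∂ₓ (∂ₓ u)) t x ≤ 0) :
    ∂ₓ (∂ₓ (burgersFlux f ν u)) t x ≤ -(σ * ∂ₓ u t x ^ 2) := by
  rw [h.dxx_flux ht, h_dxx]
  nlinarith [h.hν, mul_le_mul_of_nonneg_right (h.hconv (u t x)) (sq_nonneg (∂ₓ u t x))]

theorem dx_le (h : IsBurgersSolution f σ ν u) {M : ℝ} (hM : ∀ x, ∂ₓ u 0 x ≤ M) (ht : 0 ≤ t)
    (x : ℝ) : ∂ₓ u t x ≤ M := by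
  refine le_of_deriv_nonpos_at_space_max one_pos h.contDiffOn_dx.continuousOn h.periodic_dx hM
    (fun t ht x => (h.hasDerivAt_time_dx ht x).differentiableAt)
    (fun t ht x _ h_dxx h_dxxx => ?_) ht x
  rw [(h.hasDerivAt_time_dx ht x).deriv]
  have := h.dxx_flux_le ht.le h_dxx h_dxxx
  nlinarith [h.hσ, sq_nonneg (∂ₓ u t x)]

theorem mul_dx_le_one (h : IsBurgersSolution f σ ν u) (ht : 0 ≤ t) (x : ℝ) :
    σ * t * ∂ₓ u t x ≤ 1 := by
  have h_time : ∀ t, 0 < t → ∀ x, HasDerivAt (fun s => σ * s * ∂ₓ u s x)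
      (σ * ∂ₓ u t x + σ * t * ∂ₓ (∂ₓ (burgersFlux f ν u)) t x) t := fun t ht x =>
    (((hasDerivAt_id t).const_mul σ).mul (h.hasDerivAt_time_dx ht x)).congr_deriv (by simp)
  refine le_of_deriv_nonpos_at_space_max (φ := fun t x => σ * t * ∂ₓ u t x) one_pos
    ((by fun_prop : Continuous fun q : ℝ × ℝ => σ * q.1).continuousOn.mul
      h.contDiffOn_dx.continuousOn)
    (fun t x => by simp only [h.periodic_dx t x]) (by simp)
    (fun t ht x => (h_time t ht x).differentiableAt) (fun t ht x h_gt h_dx h_dxx => ?_) ht x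
  have hσt : 0 < σ * t := mul_pos h.hσ ht
  simp only [spaceDeriv_mul_left] at h_dx h_dxx
  have h_flux := h.dxx_flux_le ht.le ((mul_eq_zero_iff_left hσt.ne').1 h_dx)
    (nonpos_of_mul_nonpos_right h_dxx hσt)
  have h_dx_pos : 0 < ∂ₓ u t x := pos_of_mul_pos_right (one_pos.trans h_gt) hσt.le
  calc deriv (fun s => σ * s * ∂ₓ u s x) t
      = σ * ∂ₓ u t x + σ * t * ∂ₓ (∂ₓ (burgersFlux f ν u)) t x := (h_time t ht x).deriv
    _ ≤ σ * ∂ₓ u t x + σ * t * -(σ * ∂ₓ u t x ^ 2) := by gcongr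
    _ = σ * ∂ₓ u t x * (1 - σ * t * ∂ₓ u t x) := by ring
    _ ≤ 0 := mul_nonpos_of_nonneg_of_nonpos (mul_pos h.hσ h_dx_pos).le (by linarith)

theorem mul_flux_le (h : IsBurgersSolution f σ ν u) {s M : ℝ}
    (hM : ∀ x, s * burgersFlux f ν u 0 x ≤ M) (ht : 0 ≤ t) (x : ℝ) :
    s * burgersFlux f ν u t x ≤ M := by
  have h_time := fun t ht x => (h.hasDerivAt_time_flux (t := t) ht x).const_mul s
  refine le_of_deriv_nonpos_at_space_max (φ := fun t x => s * burgersFlux f ν u t x) one_pos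
    (continuousOn_const.mul h.contDiffOn_flux.continuousOn)
    (fun t x => by simp only [h.periodic_flux t x]) hM
    (fun t ht x => (h_time t ht x).differentiableAt) (fun t ht x _ h_dx h_dxx => ?_) ht x
  simp only [spaceDeriv_mul_left (fun _ => s)] at h_dx h_dxx
  rw [(h_time t ht x).deriv]
  have := mul_le_mul_of_nonneg_left h_dxx h.hν.le
  linear_combination this - deriv f (u t x) * h_dx

theorem abs_flux_le (h : IsBurgersSolution f σ ν u) {M : ℝ}
    (hM : ∀ x, |burgersFlux f ν u 0 x| ≤ M) (ht : 0 ≤ t) (x : ℝ) :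
    |burgersFlux f ν u t x| ≤ M := by
  refine abs_le'.2 ⟨?_, ?_⟩
  · simpa using h.mul_flux_le (s := 1) (fun y => by simpa using (abs_le'.1 (hM y)).1) ht x
  · simpa using h.mul_flux_le (s := -1) (fun y => by simpa using (abs_le'.1 (hM y)).2) ht x

theorem abs_le_of_dx_le (h : IsBurgersSolution f σ ν u) {B : ℝ} (ht : 0 ≤ t)
    (hB : ∀ x, ∂ₓ u t x ≤ B) (x : ℝ) : |u t x| ≤ B := by
  simpa using abs_le_mul_of_deriv_le_of_integral_eq_zero (a := 0) one_pos
    (fun y => (h.hasDerivAt_space ht y).differentiableAt) (h.hper t)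
    (by simpa using h.intervalIntegral_eq_zero ht) hB x

theorem continuous_slice_dx (h : IsBurgersSolution f σ ν u) (ht : 0 ≤ t) :
    Continuous (iteratedDeriv 1 (u t)) := by
  rw [iteratedDeriv_one]
  exact continuous_slice h.contDiffOn_dx.continuousOn ht

theorem abs_dx_zero_le (h : IsBurgersSolution f σ ν u) (x : ℝ) : |∂ₓ u 0 x| ≤ burgersD u := by
  have h_sup := abs_iteratedDeriv_le_sobLp_top (h.continuous_slice_dx le_rfl)
    (by rw [iteratedDeriv_one]; exact h.periodic_dx 0) x
  rw [iteratedDeriv_one] at h_sup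
  exact h_sup.trans (le_max_right _ _)

theorem dx_le_burgersD (h : IsBurgersSolution f σ ν u) (ht : 0 ≤ t) (x : ℝ) :
    ∂ₓ u t x ≤ burgersD u :=
  h.dx_le (fun y => (le_abs_self _).trans (h.abs_dx_zero_le y)) ht x

theorem abs_le_burgersD (h : IsBurgersSolution f σ ν u) (ht : 0 ≤ t) (x : ℝ) :
    |u t x| ≤ burgersD u :=
  h.abs_le_of_dx_le ht (h.dx_le_burgersD ht) x

theorem abs_le_inv_mul (h : IsBurgersSolution f σ ν u) (ht : 0 < t) (x : ℝ) :
    |u t x| ≤ (σ * t)⁻¹ :=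
  h.abs_le_of_dx_le ht.le (fun y => by
    rw [← one_div, le_div_iff₀' (mul_pos h.hσ ht)]; exact h.mul_dx_le_one ht.le y) x

theorem mul_abs_dx_le (h : IsBurgersSolution f σ ν u) {F : ℝ}
    (hF : ∀ y, |y| ≤ burgersD u → |f y| ≤ F) (ht : 0 ≤ t) (x : ℝ) :
    ν * |∂ₓ u t x| ≤ ν * burgersD u + 2 * F := by
  have hν_abs (s y : ℝ) : ν * |∂ₓ u s y| = |burgersFlux f ν u s y + f (u s y)| := by
    rw [burgersFlux, sub_add_cancel, abs_mul, abs_of_pos h.hν]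
  have h_flux_zero (y : ℝ) : |burgersFlux f ν u 0 y| ≤ ν * burgersD u + F := calc
    |burgersFlux f ν u 0 y| ≤ |ν * ∂ₓ u 0 y| + |f (u 0 y)| := abs_sub _ _
    _ ≤ ν * burgersD u + F := by
      rw [abs_mul, abs_of_pos h.hν]
      exact add_le_add (mul_le_mul_of_nonneg_left (h.abs_dx_zero_le y) h.hν.le)
        (hF _ (h.abs_le_burgersD le_rfl y))
  rw [hν_abs]
  linarith [abs_add_le (burgersFlux f ν u t x) (f (u t x)), h.abs_flux_le h_flux_zero ht x,
    hF _ (h.abs_le_burgersD ht x)]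

theorem sobLp_zero_one_pos (h : IsBurgersSolution f σ ν u) : 0 < sobLp 0 1 (u 0) := by
  have h_cont : Continuous (u 0) := continuous_slice h.hu.continuousOn self_mem_Ici
  obtain ⟨x, hx⟩ := h.hinit
  obtain ⟨y, hy, hxy⟩ := Function.Periodic.exists_mem_Ico₀ (h.hper 0) one_pos x
  rw [sobLp_one (by simpa using h_cont), iteratedDeriv_zero]
  exact intervalIntegral.integral_pos one_pos h_cont.abs.continuousOn (fun _ _ => abs_nonneg _)
    ⟨y, Ico_subset_Icc_self hy, abs_pos.2 (hxy ▸ hx)⟩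

theorem burgersD_pos (h : IsBurgersSolution f σ ν u) : 0 < burgersD u :=
  (inv_pos.2 h.sobLp_zero_one_pos).trans_le (le_max_left _ _)

theorem inv_sq_burgersD_le_energy_zero (h : IsBurgersSolution f σ ν u) :
    (burgersD u ^ 2)⁻¹ ≤ ∫ x in (0 : ℝ)..1, u 0 x ^ 2 := by
  have h_cont : Continuous (iteratedDeriv 0 (u 0)) := by
    simpa using continuous_slice h.hu.continuousOn self_mem_Ici
  have h_inv : (burgersD u)⁻¹ ≤ sobLp 0 2 (u 0) := calc
    (burgersD u)⁻¹ ≤ sobLp 0 1 (u 0) :=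
      inv_le_of_inv_le₀ h.sobLp_zero_one_pos (le_max_left _ _)
    _ ≤ sobLp 0 2 (u 0) := sobLp_mono h_cont one_le_two
  have h_sq := sobLp_two_sq h_cont
  rw [iteratedDeriv_zero] at h_sq
  rw [← h_sq, ← inv_pow]
  have := h.burgersD_pos
  gcongr

theorem mul_integral_sq_dx_le (h : IsBurgersSolution f σ ν u) {E : ℝ} (ht : 0 ≤ t)
    (hE : sobLp 1 2 (u t) ^ 2 ≤ E * ν⁻¹) : ν * ∫ x in (0 : ℝ)..1, ∂ₓ u t x ^ 2 ≤ E := by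
  rw [sobLp_two_sq (h.continuous_slice_dx ht), iteratedDeriv_one] at hE
  rwa [← le_div_iff₀' h.hν, div_eq_mul_inv]

end IsBurgersSolution

section Periodic

variable {c : ℝ} {v w v' w' : ℝ → ℝ}

theorem intervalIntegral_comp_add_right_of_periodic (hw : Function.Periodic w c) (ℓ : ℝ) :
    ∫ x in (0 : ℝ)..c, w (x + ℓ) = ∫ x in (0 : ℝ)..c, w x := by
  rw [intervalIntegral.integral_comp_add_right, zero_add, add_comm c ℓ,
    hw.intervalIntegral_add_eq ℓ 0, zero_add]

theorem intervalIntegral_mul_deriv_of_periodic (hv : ∀ x, HasDerivAt v (v' x) x)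
    (hw : ∀ x, HasDerivAt w (w' x) x) (hv' : Continuous v') (hw' : Continuous w')
    (hv_per : Function.Periodic v c) (hw_per : Function.Periodic w c) :
    ∫ x in (0 : ℝ)..c, v x * w' x = -∫ x in (0 : ℝ)..c, v' x * w x := by
  rw [intervalIntegral.integral_mul_deriv_eq_deriv_mul (fun x _ => hv x) (fun x _ => hw x)
    (hv'.intervalIntegrable _ _) (hw'.intervalIntegrable _ _), hv_per.eq, hw_per.eq, sub_self,
    zero_sub]

theorem intervalIntegral_comp_mul_deriv_of_periodic {f : ℝ → ℝ} (hf : Continuous f)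
    (hv : ∀ x, HasDerivAt v (v' x) x) (hv' : Continuous v') (hv_per : Function.Periodic v c) :
    ∫ x in (0 : ℝ)..c, f (v x) * v' x = 0 := by
  have h_subst := intervalIntegral.integral_comp_mul_deriv (a := 0) (b := c) (fun x _ => hv x)
    hv'.continuousOn hf
  rwa [hv_per.eq, intervalIntegral.integral_same] at h_subst

end Periodic

namespace IsBurgersSolution

variable {f : ℝ → ℝ} {σ ν t : ℝ} {u : ℝ → ℝ → ℝ}

theorem hasDerivAt_energy (h : IsBurgersSolution f σ ν u) (ht : 0 < t) :
    HasDerivAt (fun s => ∫ x in (0 : ℝ)..1, u s x ^ 2)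
      (-(2 * (ν * ∫ x in (0 : ℝ)..1, ∂ₓ u t x ^ 2))) t := by
  have h_deriv : HasDerivAt (fun s => ∫ x in (0 : ℝ)..1, u s x ^ 2)
      (∫ x in (0 : ℝ)..1, 2 * u t x * ∂ₓ (burgersFlux f ν u) t x) t :=
    hasDerivAt_intervalIntegral_of_continuousOn (w := fun s x => u s x ^ 2)
      (w' := fun s x => 2 * u s x * ∂ₓ (burgersFlux f ν u) s x) 0 1 (Ici_mem_nhds ht)
      (h.hu.continuousOn.fun_pow 2)
      ((continuousOn_const.mul h.hu.continuousOn).mul h.contDiffOn_dx_flux.continuousOn)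
      ((eventually_gt_nhds ht).mono fun s hs x => by simpa using (h.hasDerivAt_time hs x).fun_pow 2)
  refine h_deriv.congr_deriv ?_
  have hu := continuous_slice h.hu.continuousOn ht.le
  have hdx := continuous_slice h.contDiffOn_dx.continuousOn ht.le
  have hdg := continuous_slice h.contDiffOn_dx_flux.continuousOn ht.le
  have h_parts := intervalIntegral_mul_deriv_of_periodic (h.hasDerivAt_space ht.le)
    (h.hasDerivAt_space_flux ht.le) hdx hdg (h.hper t) (h.periodic_flux t)
  have h_transport := intervalIntegral_comp_mul_deriv_of_periodic h.hf.continuous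
    (h.hasDerivAt_space ht.le) hdx (h.hper t)
  have hf_cont := h.hf.continuous
  calc ∫ x in (0 : ℝ)..1, 2 * u t x * ∂ₓ (burgersFlux f ν u) t x
      = 2 * ∫ x in (0 : ℝ)..1, u t x * ∂ₓ (burgersFlux f ν u) t x := by
        simp only [mul_assoc, intervalIntegral.integral_const_mul]
    _ = -(2 * ∫ x in (0 : ℝ)..1, (ν * ∂ₓ u t x ^ 2 - f (u t x) * ∂ₓ u t x)) := by
        rw [h_parts, mul_neg]
        simp only [burgersFlux]
        congr! 3
        ext x
        ring
    _ = -(2 * (ν * ∫ x in (0 : ℝ)..1, ∂ₓ u t x ^ 2)) := by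
        rw [intervalIntegral.integral_sub (Continuous.intervalIntegrable (by fun_prop) _ _)
          (Continuous.intervalIntegrable (by fun_prop) _ _), h_transport, sub_zero,
          intervalIntegral.integral_const_mul]

theorem energy_zero_sub_le_energy (h : IsBurgersSolution f σ ν u) {E : ℝ}
    (hE : ∀ t, 0 ≤ t → ν * ∫ x in (0 : ℝ)..1, ∂ₓ u t x ^ 2 ≤ E) (ht : 0 ≤ t) :
    (∫ x in (0 : ℝ)..1, u 0 x ^ 2) - 2 * E * t ≤ ∫ x in (0 : ℝ)..1, u t x ^ 2 := by
  have h_deriv := fun s hs => (h.hasDerivAt_energy (t := s) hs).add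
    ((hasDerivAt_id s).const_mul (2 * E))
  have h_mono : MonotoneOn (fun s => (∫ x in (0 : ℝ)..1, u s x ^ 2) + 2 * E * s) (Ici 0) := by
    refine monotoneOn_of_hasDerivWithinAt_nonneg (convex_Ici 0)
      ((continuousOn_intervalIntegral 0 1 (h.hu.continuousOn.pow 2)).add (by fun_prop))
      (fun s hs => (h_deriv s (by simpa using hs)).hasDerivWithinAt) fun s hs => ?_
    linarith [hE s (interior_subset hs)]
  have := h_mono self_mem_Ici ht ht
  simp only [mul_zero, add_zero] at this
  linarith

end IsBurgersSolution

theorem abs_trapezoidal_error_le_of_contDiff {f : ℝ → ℝ} (hf : ContDiff ℝ 2 f) {ζ a b : ℝ}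
    (hζ : ∀ y ∈ uIcc a b, |iteratedDeriv 2 f y| ≤ ζ) {N : ℕ} (hN : 0 < N) :
    |trapezoidal_error f N a b| ≤ |b - a| ^ 3 * ζ / (12 * N ^ 2) := by
  rcases eq_or_ne a b with rfl | hab
  · simp
  refine trapezoidal_error_le_of_c2 hf.contDiffOn (fun y => ?_) hN
  by_cases hy : y ∈ uIcc a b
  · have h_unique : UniqueDiffOn ℝ (uIcc a b) := uniqueDiffOn_Icc (min_lt_max.2 hab)
    rw [iteratedDerivWithin_eq_iteratedDeriv h_unique hf.contDiffAt hy]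
    exact hζ y hy
  · rw [iteratedDerivWithin_succ,
      derivWithin_zero_of_notMem_closure (by rwa [uIcc, isClosed_Icc.closure_eq]), abs_zero]
    exact (abs_nonneg _).trans (hζ a left_mem_uIcc)

/-- The integral of `u t` over the window `[x, x + ℓ]`; it is integrated against `u t x` to
measure the correlation of `u` at scale `ℓ`. -/
noncomputable def windowIntegral (u : ℝ → ℝ → ℝ) (ℓ t x : ℝ) : ℝ := ∫ r in (0 : ℝ)..ℓ, u t (x + r)

section Window

variable {u : ℝ → ℝ → ℝ} {s : Set ℝ} {t ℓ : ℝ}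

theorem continuousOn_windowIntegral (ℓ : ℝ)
    (hu : ContinuousOn (Function.uncurry u) (s ×ˢ univ)) :
    ContinuousOn (Function.uncurry (windowIntegral u ℓ)) (s ×ˢ univ) :=
  continuousOn_intervalIntegral (w := fun (q : ℝ × ℝ) r => u q.1 (q.2 + r)) 0 ℓ
    (hu.comp (f := fun q : (ℝ × ℝ) × ℝ => (q.1.1, q.1.2 + q.2)) (by fun_prop)
      fun q hq => ⟨hq.1.1, mem_univ _⟩)

theorem hasDerivAt_windowIntegral (hu : Continuous (u t)) (ℓ x : ℝ) :
    HasDerivAt (windowIntegral u ℓ t) (u t (x + ℓ) - u t x) x := by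
  have h_prim (y : ℝ) : HasDerivAt (fun y => ∫ r in (0 : ℝ)..y, u t r) (u t y) y :=
    intervalIntegral.integral_hasDerivAt_right (hu.intervalIntegrable _ _)
      (hu.stronglyMeasurableAtFilter _ _) hu.continuousAt
  have h_eq : windowIntegral u ℓ t =
      fun y => (∫ r in (0 : ℝ)..y + ℓ, u t r) - ∫ r in (0 : ℝ)..y, u t r := by
    ext y
    rw [windowIntegral, intervalIntegral.integral_comp_add_left, add_zero,
      intervalIntegral.integral_interval_sub_left (hu.intervalIntegrable _ _)
        (hu.intervalIntegrable _ _)]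
  rw [h_eq]
  exact ((h_prim (x + ℓ)).comp_add_const x ℓ).sub (h_prim x)

theorem periodic_windowIntegral (hu : Function.Periodic (u t) 1) (ℓ : ℝ) :
    Function.Periodic (windowIntegral u ℓ t) 1 := fun x => by
  simp only [windowIntegral, add_right_comm x 1, hu _]

theorem intervalIntegral_windowIntegral_eq_zero (hu : Continuous (u t))
    (hper : Function.Periodic (u t) 1) (hmean : ∫ x in (0 : ℝ)..1, u t x = 0) (ℓ : ℝ) :
    ∫ x in (0 : ℝ)..1, windowIntegral u ℓ t x = 0 := by
  simp only [windowIntegral]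
  rw [intervalIntegral_intervalIntegral_swap
    (((Continuous.continuousOn (by fun_prop)).integrableOn_compact
      (isCompact_uIcc.prod isCompact_uIcc)).mono_set
        (prod_mono uIoc_subset_uIcc uIoc_subset_uIcc))]
  simp only [intervalIntegral_comp_add_right_of_periodic hper, hmean,
    intervalIntegral.integral_zero]

theorem windowIntegral_sub_mul_le (hu : Differentiable ℝ (u t)) {D : ℝ}
    (hD : ∀ y, deriv (u t) y ≤ D) (hℓ : 0 ≤ ℓ) (x : ℝ) :
    windowIntegral u ℓ t x - ℓ * u t x ≤ D * ℓ ^ 2 / 2 := by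
  have h_slope : ∀ r ∈ Icc 0 ℓ, u t (x + r) ≤ u t x + D * r := fun r hr => by
    have := image_sub_le_mul_sub_of_deriv_le hu hD (show x ≤ x + r by linarith [hr.1])
    rw [add_sub_cancel_left] at this
    linarith
  have hu_cont := hu.continuous
  calc windowIntegral u ℓ t x - ℓ * u t x
      ≤ (∫ r in (0 : ℝ)..ℓ, (u t x + D * r)) - ℓ * u t x := by
        gcongr
        exact intervalIntegral.integral_mono_on hℓ (Continuous.intervalIntegrable (by fun_prop) _ _)
          (Continuous.intervalIntegrable (by fun_prop) _ _) h_slope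
    _ = D * ℓ ^ 2 / 2 := by
        rw [intervalIntegral.integral_add (by simp)
            (Continuous.intervalIntegrable (by fun_prop) _ _),
          intervalIntegral.integral_const, intervalIntegral.integral_const_mul, integral_id,
          smul_eq_mul]
        ring

theorem integral_abs_windowIntegral_sub_mul_le (hu : Differentiable ℝ (u t))
    (hper : Function.Periodic (u t) 1) (hmean : ∫ x in (0 : ℝ)..1, u t x = 0) {D : ℝ}
    (hD : ∀ y, deriv (u t) y ≤ D) (hℓ : 0 ≤ ℓ) :
    ∫ x in Ioc (0 : ℝ) 1, |windowIntegral u ℓ t x - ℓ * u t x| ≤ D * ℓ ^ 2 := by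
  have hu_cont := hu.continuous
  have hW_cont : Continuous (windowIntegral u ℓ t) :=
    continuous_iff_continuousAt.2 fun x => (hasDerivAt_windowIntegral hu_cont ℓ x).continuousAt
  have h_cont : Continuous fun x => windowIntegral u ℓ t x - ℓ * u t x := by fun_prop
  obtain ⟨B, hB⟩ := isCompact_Icc.exists_bound_of_continuousOn (s := Icc (0 : ℝ) 1)
    h_cont.continuousOn
  have h_mean : ∫ x in Ioc (0 : ℝ) 1, (windowIntegral u ℓ t x - ℓ * u t x) = 0 := by
    rw [← intervalIntegral.integral_of_le zero_le_one,
      intervalIntegral.integral_sub (hW_cont.intervalIntegrable _ _)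
        (Continuous.intervalIntegrable (by fun_prop) _ _),
      intervalIntegral_windowIntegral_eq_zero hu_cont hper hmean,
      intervalIntegral.integral_const_mul, hmean, mul_zero, sub_zero]
  have h_bound : ∀ᵐ x ∂volume.restrict (Ioc (0 : ℝ) 1),
      |windowIntegral u ℓ t x - ℓ * u t x| ≤ B := by
    filter_upwards [ae_restrict_mem measurableSet_Ioc] with x hx using hB x (Ioc_subset_Icc_self hx)
  have := integral_abs_le_two_mul h_cont.aestronglyMeasurable h_bound h_mean
    (.of_forall (windowIntegral_sub_mul_le hu hD hℓ))
  linarith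

end Window

section Periodic

variable {c ℓ : ℝ} {v v' : ℝ → ℝ}

theorem intervalIntegral_two_mul_trapezoidal_error_of_periodic {f : ℝ → ℝ} (hf : Continuous f)
    (hv : Continuous v) (hv_per : Function.Periodic v c) (ℓ : ℝ) :
    ∫ x in (0 : ℝ)..c, 2 * trapezoidal_error f 1 (v x) (v (x + ℓ)) =
      ∫ x in (0 : ℝ)..c, (v (x + ℓ) * f (v x) - v x * f (v (x + ℓ))) := by
  let Ψ y := y * f y - 2 * ∫ z in (0 : ℝ)..y, f z
  have hΨ : Continuous Ψ := by
    have : Continuous fun y => ∫ z in (0 : ℝ)..y, f z :=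
      intervalIntegral.continuous_primitive (fun a b => hf.intervalIntegrable a b) 0
    fun_prop
  have h_error (a b : ℝ) :
      2 * trapezoidal_error f 1 a b = Ψ b - Ψ a + (b * f a - a * f b) := by
    have := intervalIntegral.integral_interval_sub_left (μ := volume)
      (hf.intervalIntegrable 0 b) (hf.intervalIntegrable 0 a)
    simp only [trapezoidal_error, trapezoidal_integral_one, ← this, Ψ]
    ring
  have h_shift := intervalIntegral_comp_add_right_of_periodic (c := c)
    (w := fun x => Ψ (v x)) (fun x => by simp only [hv_per x]) ℓ
  simp only [h_error]
  rw [intervalIntegral.integral_add (Continuous.intervalIntegrable (by fun_prop) _ _)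
    (Continuous.intervalIntegrable (by fun_prop) _ _),
    intervalIntegral.integral_sub (Continuous.intervalIntegrable (by fun_prop) _ _)
    (Continuous.intervalIntegrable (by fun_prop) _ _), h_shift, sub_self, zero_add]

theorem intervalIntegral_mul_deriv_shift_sub_of_periodic (hv : ∀ x, HasDerivAt v (v' x) x)
    (hv' : Continuous v') (hv_per : Function.Periodic v c) (ℓ : ℝ) :
    ∫ x in (0 : ℝ)..c, (v x * v' (x + ℓ) - v (x + ℓ) * v' x) =
      -(2 * ∫ x in (0 : ℝ)..c, (v (x + ℓ) - v x) * v' x) := by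
  have hv_cont : Continuous v := continuous_iff_continuousAt.2 fun x => (hv x).continuousAt
  have h_parts := intervalIntegral_mul_deriv_of_periodic hv
    (fun x => (hv (x + ℓ)).comp_add_const x ℓ) hv' (by fun_prop) hv_per
    (fun x => by simp only [add_right_comm x c, hv_per _])
  have h_self := intervalIntegral_comp_mul_deriv_of_periodic continuous_id hv hv' hv_per
  simp only [id_eq] at h_self
  simp only [sub_mul]
  rw [intervalIntegral.integral_sub (Continuous.intervalIntegrable (by fun_prop) _ _)
    (Continuous.intervalIntegrable (by fun_prop) _ _),
    intervalIntegral.integral_sub (Continuous.intervalIntegrable (by fun_prop) _ _)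
    (Continuous.intervalIntegrable (by fun_prop) _ _), h_parts, h_self]
  simp only [mul_comm (v' _)]
  ring

end Periodic

/-- The correlation `∫ u(x) ∫₀^ℓ u(x + r) dr dx` of `u t` at scale `ℓ`. Its decay in time is
what forces the second-order structure function to be large. -/
noncomputable def windowCorrelation (u : ℝ → ℝ → ℝ) (ℓ t : ℝ) : ℝ :=
  ∫ x in (0 : ℝ)..1, u t x * windowIntegral u ℓ t x

namespace IsBurgersSolution

variable {f : ℝ → ℝ} {σ ν t ℓ : ℝ} {u : ℝ → ℝ → ℝ}

theorem hasDerivAt_time_windowIntegral (h : IsBurgersSolution f σ ν u) (ht : 0 < t) (ℓ x : ℝ) :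
    HasDerivAt (fun s => windowIntegral u ℓ s x)
      (burgersFlux f ν u t (x + ℓ) - burgersFlux f ν u t x) t := by
  have h_deriv : HasDerivAt (fun s => windowIntegral u ℓ s x)
      (∫ r in (0 : ℝ)..ℓ, ∂ₓ (burgersFlux f ν u) t (x + r)) t :=
    hasDerivAt_intervalIntegral_of_continuousOn (w := fun s r => u s (x + r))
      (w' := fun s r => ∂ₓ (burgersFlux f ν u) s (x + r)) 0 ℓ (Ici_mem_nhds ht)
      (continuousOn_comp_space (by fun_prop) h.hu.continuousOn)
      (continuousOn_comp_space (by fun_prop) h.contDiffOn_dx_flux.continuousOn)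
      ((eventually_gt_nhds ht).mono fun s hs r => h.hasDerivAt_time hs (x + r))
  refine h_deriv.congr_deriv ?_
  rw [intervalIntegral.integral_comp_add_left, add_zero]
  exact intervalIntegral.integral_eq_sub_of_hasDerivAt
    (fun y _ => h.hasDerivAt_space_flux ht.le y)
    ((continuous_slice h.contDiffOn_dx_flux.continuousOn ht.le).intervalIntegrable _ _)

theorem hasDerivAt_windowCorrelation (h : IsBurgersSolution f σ ν u) (ht : 0 < t) (ℓ : ℝ) :
    HasDerivAt (windowCorrelation u ℓ) (∫ x in (0 : ℝ)..1,
      (u t x * burgersFlux f ν u t (x + ℓ) - u t (x + ℓ) * burgersFlux f ν u t x)) t := by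
  set g := burgersFlux f ν u with hg_def
  have hu := h.hu.continuousOn
  have hg := h.contDiffOn_flux.continuousOn
  have hdg := h.contDiffOn_dx_flux.continuousOn
  have hW := continuousOn_windowIntegral ℓ hu
  rw [← hg_def] at hg hdg
  have hg_shift : ContinuousOn (Function.uncurry fun s x => g s (x + ℓ)) (Ici 0 ×ˢ univ) :=
    continuousOn_comp_space (by fun_prop) hg
  refine (hasDerivAt_intervalIntegral_of_continuousOn
    (w := fun s x => u s x * windowIntegral u ℓ s x)
    (w' := fun s x => ∂ₓ g s x * windowIntegral u ℓ s x + u s x * (g s (x + ℓ) - g s x))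
    0 1 (Ici_mem_nhds ht) (hu.mul hW) ((hdg.mul hW).add (hu.mul (hg_shift.sub hg)))
    ((eventually_gt_nhds ht).mono fun s hs x =>
      (h.hasDerivAt_time hs x).mul (h.hasDerivAt_time_windowIntegral hs ℓ x))).congr_deriv ?_
  replace hu := continuous_slice hu ht.le
  replace hg := continuous_slice hg ht.le
  replace hdg := continuous_slice hdg ht.le
  replace hW := continuous_slice hW ht.le
  have h_parts := intervalIntegral_mul_deriv_of_periodic (hasDerivAt_windowIntegral hu ℓ)
    (h.hasDerivAt_space_flux ht.le) (by fun_prop) hdg (periodic_windowIntegral (h.hper t) ℓ)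
    (h.periodic_flux t)
  rw [← hg_def] at h_parts
  simp only [mul_comm (∂ₓ g t _)]
  rw [intervalIntegral.integral_add (Continuous.intervalIntegrable (by fun_prop) _ _)
    (Continuous.intervalIntegrable (by fun_prop) _ _), h_parts, ← intervalIntegral.integral_neg,
    ← intervalIntegral.integral_add (Continuous.intervalIntegrable (by fun_prop) _ _)
    (Continuous.intervalIntegrable (by fun_prop) _ _)]
  congr! 2 with x
  ring

theorem intervalIntegral_flux_correlation_eq (h : IsBurgersSolution f σ ν u) (ht : 0 ≤ t) (ℓ : ℝ) :
    ∫ x in (0 : ℝ)..1,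
        (u t x * burgersFlux f ν u t (x + ℓ) - u t (x + ℓ) * burgersFlux f ν u t x) =
      (∫ x in (0 : ℝ)..1, 2 * trapezoidal_error f 1 (u t x) (u t (x + ℓ))) -
        2 * (ν * ∫ x in (0 : ℝ)..1, (u t (x + ℓ) - u t x) * ∂ₓ u t x) := by
  have hu := continuous_slice h.hu.continuousOn ht
  have hdx := continuous_slice h.contDiffOn_dx.continuousOn ht
  have hf := h.hf.continuous
  have h_trapezoid := intervalIntegral_two_mul_trapezoidal_error_of_periodic hf hu (h.hper t) ℓ
  have h_shift := intervalIntegral_mul_deriv_shift_sub_of_periodic (h.hasDerivAt_space ht) hdx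
    (h.hper t) ℓ
  calc ∫ x in (0 : ℝ)..1,
        (u t x * burgersFlux f ν u t (x + ℓ) - u t (x + ℓ) * burgersFlux f ν u t x)
      = ∫ x in (0 : ℝ)..1, ((u t (x + ℓ) * f (u t x) - u t x * f (u t (x + ℓ))) +
          ν * (u t x * ∂ₓ u t (x + ℓ) - u t (x + ℓ) * ∂ₓ u t x)) := by
        simp only [burgersFlux]
        congr! 2 with x
        ring
    _ = _ := by
        rw [intervalIntegral.integral_add (Continuous.intervalIntegrable (by fun_prop) _ _)
          (Continuous.intervalIntegrable (by fun_prop) _ _), ← h_trapezoid,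
          intervalIntegral.integral_const_mul ν, h_shift]
        ring

theorem abs_windowCorrelation_sub_mul_energy_le (h : IsBurgersSolution f σ ν u) (ht : 0 ≤ t)
    (hℓ : 0 ≤ ℓ) : |windowCorrelation u ℓ t - ℓ * ∫ x in (0 : ℝ)..1, u t x ^ 2| ≤
      burgersD u ^ 2 * ℓ ^ 2 := by
  have hu := continuous_slice h.hu.continuousOn ht
  have hW := continuous_slice (continuousOn_windowIntegral ℓ h.hu.continuousOn) ht
  calc |windowCorrelation u ℓ t - ℓ * ∫ x in (0 : ℝ)..1, u t x ^ 2|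
      = |∫ x in (0 : ℝ)..1, u t x * (windowIntegral u ℓ t x - ℓ * u t x)| := by
        rw [windowCorrelation, ← intervalIntegral.integral_const_mul,
          ← intervalIntegral.integral_sub (Continuous.intervalIntegrable (by fun_prop) _ _)
            (Continuous.intervalIntegrable (by fun_prop) _ _)]
        congr! 3 with x
        ring
    _ ≤ ∫ x in (0 : ℝ)..1, |u t x * (windowIntegral u ℓ t x - ℓ * u t x)| :=
        intervalIntegral.abs_integral_le_integral_abs zero_le_one
    _ ≤ ∫ x in (0 : ℝ)..1, burgersD u * |windowIntegral u ℓ t x - ℓ * u t x| := by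
        refine intervalIntegral.integral_mono_on zero_le_one
          (Continuous.intervalIntegrable (by fun_prop) _ _)
          (Continuous.intervalIntegrable (by fun_prop) _ _) fun x _ => ?_
        rw [abs_mul]
        gcongr
        exact h.abs_le_burgersD ht x
    _ ≤ burgersD u * (burgersD u * ℓ ^ 2) := by
        rw [intervalIntegral.integral_const_mul, intervalIntegral.integral_of_le zero_le_one]
        refine mul_le_mul_of_nonneg_left ?_ h.burgersD_pos.le
        exact integral_abs_windowIntegral_sub_mul_le
          (fun x => (h.hasDerivAt_space ht x).differentiableAt) (h.hper t)
          (h.intervalIntegral_eq_zero ht) (h.dx_le_burgersD ht) hℓ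
    _ = burgersD u ^ 2 * ℓ ^ 2 := by ring

variable {E : ℝ}

theorem abs_two_mul_trapezoidal_error_le (h : IsBurgersSolution f σ ν u) {ζ : ℝ}
    (hζ : ∀ y, |y| ≤ burgersD u → |iteratedDeriv 2 f y| ≤ ζ) (ht : 0 ≤ t) (ℓ x : ℝ) :
    |2 * trapezoidal_error f 1 (u t x) (u t (x + ℓ))| ≤
      ζ * burgersD u * (u t (x + ℓ) - u t x) ^ 2 := by
  have hx := h.abs_le_burgersD ht x
  have hxℓ := h.abs_le_burgersD ht (x + ℓ)
  have h_seg : uIcc (u t x) (u t (x + ℓ)) ⊆ Icc (-burgersD u) (burgersD u) :=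
    uIcc_subset_Icc (abs_le.1 hx) (abs_le.1 hxℓ)
  have h_error := abs_trapezoidal_error_le_of_contDiff (h.hf.of_le (by norm_cast))
    (fun y hy => hζ y (abs_le.2 (h_seg hy))) one_pos
  have hδ : |u t (x + ℓ) - u t x| ≤ 2 * burgersD u := by
    linarith [abs_sub (u t (x + ℓ)) (u t x)]
  have hζ0 : 0 ≤ ζ := (abs_nonneg _).trans (hζ _ hx)
  calc |2 * trapezoidal_error f 1 (u t x) (u t (x + ℓ))|
      ≤ ζ / 6 * (|u t (x + ℓ) - u t x| * |u t (x + ℓ) - u t x| ^ 2) := by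
        rw [abs_mul, abs_two]
        linear_combination 2 * h_error
    _ ≤ ζ / 6 * (2 * burgersD u * |u t (x + ℓ) - u t x| ^ 2) := by gcongr
    _ ≤ ζ * burgersD u * (u t (x + ℓ) - u t x) ^ 2 := by
        rw [sq_abs]
        have : 0 ≤ ζ * burgersD u * (u t (x + ℓ) - u t x) ^ 2 :=
          mul_nonneg (mul_nonneg hζ0 h.burgersD_pos.le) (sq_nonneg _)
        linarith

theorem dissipation_correlation_le (h : IsBurgersSolution f σ ν u) {θ : ℝ} (hθ : 0 < θ)
    (hE : ν * ∫ x in (0 : ℝ)..1, ∂ₓ u t x ^ 2 ≤ E) (ht : 0 ≤ t) :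
    2 * (ν * ∫ x in (0 : ℝ)..1, (u t (x + ℓ) - u t x) * ∂ₓ u t x) ≤
      ν / θ * (∫ x in (0 : ℝ)..1, (u t (x + ℓ) - u t x) ^ 2) + θ * E := by
  have hu := continuous_slice h.hu.continuousOn ht
  have hdx := continuous_slice h.contDiffOn_dx.continuousOn ht
  have hν := h.hν
  -- Young's inequality `2 a b ≤ a² / θ + θ b²`
  have h_young (x : ℝ) : 2 * ν * ((u t (x + ℓ) - u t x) * ∂ₓ u t x) ≤
      ν / θ * (u t (x + ℓ) - u t x) ^ 2 + θ * ν * ∂ₓ u t x ^ 2 := by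
    have : ν / θ * (u t (x + ℓ) - u t x) ^ 2 + θ * ν * ∂ₓ u t x ^ 2 -
        2 * ν * ((u t (x + ℓ) - u t x) * ∂ₓ u t x) =
        ν / θ * (u t (x + ℓ) - u t x - θ * ∂ₓ u t x) ^ 2 := by field_simp; ring
    have : 0 ≤ ν / θ * (u t (x + ℓ) - u t x - θ * ∂ₓ u t x) ^ 2 := by positivity
    linarith
  calc 2 * (ν * ∫ x in (0 : ℝ)..1, (u t (x + ℓ) - u t x) * ∂ₓ u t x)
      = ∫ x in (0 : ℝ)..1, 2 * ν * ((u t (x + ℓ) - u t x) * ∂ₓ u t x) := by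
        rw [intervalIntegral.integral_const_mul, mul_assoc]
    _ ≤ ∫ x in (0 : ℝ)..1, (ν / θ * (u t (x + ℓ) - u t x) ^ 2 + θ * ν * ∂ₓ u t x ^ 2) :=
        intervalIntegral.integral_mono_on zero_le_one
          (Continuous.intervalIntegrable (by fun_prop) _ _)
          (Continuous.intervalIntegrable (by fun_prop) _ _) fun x _ => h_young x
    _ = ν / θ * (∫ x in (0 : ℝ)..1, (u t (x + ℓ) - u t x) ^ 2) +
          θ * (ν * ∫ x in (0 : ℝ)..1, ∂ₓ u t x ^ 2) := by
        rw [intervalIntegral.integral_add (Continuous.intervalIntegrable (by fun_prop) _ _)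
          (Continuous.intervalIntegrable (by fun_prop) _ _), intervalIntegral.integral_const_mul,
          intervalIntegral.integral_const_mul, mul_assoc]
    _ ≤ _ := by gcongr

theorem neg_deriv_windowCorrelation_le (h : IsBurgersSolution f σ ν u) {ζ θ : ℝ}
    (hζ : ∀ y, |y| ≤ burgersD u → |iteratedDeriv 2 f y| ≤ ζ) (hθ : 0 < θ)
    (hE : ν * ∫ x in (0 : ℝ)..1, ∂ₓ u t x ^ 2 ≤ E) (ht : 0 < t) (ℓ : ℝ) :
    -deriv (windowCorrelation u ℓ) t ≤ (ζ * burgersD u + ν / θ) *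
      (∫ x in (0 : ℝ)..1, (u t (x + ℓ) - u t x) ^ 2) + θ * E := by
  have hδ : Continuous fun x => (u t (x + ℓ) - u t x) ^ 2 :=
    (continuous_slice (continuousOn_increment h.hu.continuousOn ℓ) ht.le).pow 2
  have h_trapezoid := intervalIntegral.norm_integral_le_of_norm_le (μ := volume) zero_le_one
    (f := fun x => 2 * trapezoidal_error f 1 (u t x) (u t (x + ℓ)))
    (.of_forall fun x _ => h.abs_two_mul_trapezoidal_error_le hζ ht.le ℓ x)
    ((hδ.intervalIntegrable 0 1).const_mul _)
  rw [intervalIntegral.integral_const_mul (ζ * burgersD u), Real.norm_eq_abs] at h_trapezoid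
  rw [(h.hasDerivAt_windowCorrelation ht ℓ).deriv, h.intervalIntegral_flux_correlation_eq ht.le]
  linarith [neg_le_of_abs_le h_trapezoid, h.dissipation_correlation_le (ℓ := ℓ) hθ hE ht.le]

theorem windowCorrelation_sub_le (h : IsBurgersSolution f σ ν u) {ζ θ T₁ T₂ : ℝ}
    (hζ : ∀ y, |y| ≤ burgersD u → |iteratedDeriv 2 f y| ≤ ζ) (hθ : 0 < θ)
    (hE : ∀ t, 0 ≤ t → ν * ∫ x in (0 : ℝ)..1, ∂ₓ u t x ^ 2 ≤ E) (hT₁ : 0 ≤ T₁)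
    (hT : T₁ ≤ T₂) (ℓ : ℝ) : windowCorrelation u ℓ T₁ - windowCorrelation u ℓ T₂ ≤
      (ζ * burgersD u + ν / θ) *
        (∫ t in T₁..T₂, ∫ x in (0 : ℝ)..1, (u t (x + ℓ) - u t x) ^ 2) + θ * E * (T₂ - T₁) := by
  have hT_sub : Icc T₁ T₂ ⊆ Ici 0 := fun t ht => hT₁.trans ht.1
  have hK : ContinuousOn (windowCorrelation u ℓ) (Icc T₁ T₂) :=
    (continuousOn_intervalIntegral (w := fun t x => u t x * windowIntegral u ℓ t x) 0 1
      (h.hu.continuousOn.mul (continuousOn_windowIntegral ℓ h.hu.continuousOn))).mono hT_sub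
  have hδ : ContinuousOn (fun t => ∫ x in (0 : ℝ)..1, (u t (x + ℓ) - u t x) ^ 2) (Icc T₁ T₂) :=
    (continuousOn_intervalIntegral (w := fun t x => (u t (x + ℓ) - u t x) ^ 2) 0 1
      ((continuousOn_increment h.hu.continuousOn ℓ).fun_pow 2)).mono hT_sub
  have hδ_int : IntervalIntegrable (fun t => (ζ * burgersD u + ν / θ) *
      ∫ x in (0 : ℝ)..1, (u t (x + ℓ) - u t x) ^ 2) volume T₁ T₂ :=
    (hδ.intervalIntegrable_of_Icc hT).const_mul _
  have h_decay := intervalIntegral.sub_le_integral_of_hasDeriv_right_of_le hT hK.neg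
    (fun t ht => (h.hasDerivAt_windowCorrelation
      (hT₁.trans_lt ht.1) ℓ).differentiableAt.hasDerivAt.neg.hasDerivWithinAt)
    ((hδ.const_smul (ζ * burgersD u + ν / θ)).add
      (continuousOn_const (c := θ * E))).integrableOn_Icc
    (fun t ht => h.neg_deriv_windowCorrelation_le hζ hθ (hE t (hT₁.trans ht.1.le))
      (hT₁.trans_lt ht.1) ℓ)
  simp only [Pi.add_apply, Pi.smul_apply, Pi.neg_apply, smul_eq_mul] at h_decay
  rw [intervalIntegral.integral_add hδ_int intervalIntegrable_const,
    intervalIntegral.integral_const_mul, intervalIntegral.integral_const, smul_eq_mul] at h_decay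
  linarith

end IsBurgersSolution

theorem burgersT₁_pos {D Ct : ℝ} (hD : 0 < D) (hCt : 0 < Ct) : 0 < burgersT₁ D Ct := by
  unfold burgersT₁
  positivity

theorem burgersT₁_lt_burgersT₂ {D Ct : ℝ} (hD : 0 < D) (hCt : 0 < Ct) (σ : ℝ) :
    burgersT₁ D Ct < burgersT₂ σ D Ct :=
  (by linarith [burgersT₁_pos hD hCt] : burgersT₁ D Ct < 3 / 2 * burgersT₁ D Ct).trans_le
    (le_max_left _ _)

namespace IsBurgersSolution

variable {f : ℝ → ℝ} {σ ν t ℓ Ct ζ : ℝ} {u : ℝ → ℝ → ℝ}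

theorem inv_le_energy_burgersT₁ (h : IsBurgersSolution f σ ν u) (hCt : 0 < Ct)
    (hE : ∀ t, 0 ≤ t → ν * ∫ x in (0 : ℝ)..1, ∂ₓ u t x ^ 2 ≤ Ct) :
    (2 * burgersD u ^ 2)⁻¹ ≤ ∫ x in (0 : ℝ)..1, u (burgersT₁ (burgersD u) Ct) x ^ 2 := by
  have h_energy := h.energy_zero_sub_le_energy hE (burgersT₁_pos h.burgersD_pos hCt).le
  have h_loss : 2 * Ct * burgersT₁ (burgersD u) Ct = (burgersD u ^ 2)⁻¹ / 2 := by
    unfold burgersT₁; field_simp; norm_num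
  rw [mul_inv]
  linarith [h.inv_sq_burgersD_le_energy_zero]

theorem energy_le_inv_of_le (h : IsBurgersSolution f σ ν u) (ht : 2 * burgersD u * σ⁻¹ ≤ t) :
    ∫ x in (0 : ℝ)..1, u t x ^ 2 ≤ (4 * burgersD u ^ 2)⁻¹ := by
  have hD := h.burgersD_pos
  have hσ := h.hσ
  have ht0 : 0 < t := (by positivity : 0 < 2 * burgersD u * σ⁻¹).trans_le ht
  have hσt : 2 * burgersD u ≤ σ * t := by
    rwa [← div_eq_mul_inv, div_le_iff₀' hσ] at ht
  have h_abs (x : ℝ) : |u t x| ≤ (2 * burgersD u)⁻¹ := (h.abs_le_inv_mul ht0 x).trans (by gcongr)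
  have hu := continuous_slice h.hu.continuousOn ht0.le
  calc ∫ x in (0 : ℝ)..1, u t x ^ 2
      ≤ ∫ _ in (0 : ℝ)..1, ((2 * burgersD u)⁻¹) ^ 2 :=
        intervalIntegral.integral_mono_on zero_le_one
          (Continuous.intervalIntegrable (by fun_prop) _ _) intervalIntegrable_const
          fun x _ => sq_le_sq' (abs_le.1 (h_abs x)).1 (abs_le.1 (h_abs x)).2
    _ = (4 * burgersD u ^ 2)⁻¹ := by
        rw [intervalIntegral.integral_const, sub_zero, one_smul, inv_pow, mul_pow]; norm_num

theorem le_windowCorrelation_sub (h : IsBurgersSolution f σ ν u) (hCt : 0 < Ct)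
    (hE : ∀ t, 0 ≤ t → ν * ∫ x in (0 : ℝ)..1, ∂ₓ u t x ^ 2 ≤ Ct) (hℓ : 0 ≤ ℓ)
    (hℓD : 16 * burgersD u ^ 4 * ℓ ≤ 1) :
    ℓ / (8 * burgersD u ^ 2) ≤ windowCorrelation u ℓ (burgersT₁ (burgersD u) Ct) -
      windowCorrelation u ℓ (burgersT₂ σ (burgersD u) Ct) := by
  have hD := h.burgersD_pos
  have hT₁ := burgersT₁_pos hD hCt
  have hT := burgersT₁_lt_burgersT₂ hD hCt σ
  have h_corr₁ := abs_le.1 (h.abs_windowCorrelation_sub_mul_energy_le hT₁.le hℓ)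
  have h_corr₂ := abs_le.1 (h.abs_windowCorrelation_sub_mul_energy_le (hT₁.trans hT).le hℓ)
  have h_energy₁ := mul_le_mul_of_nonneg_left (h.inv_le_energy_burgersT₁ hCt hE) hℓ
  have h_energy₂ := mul_le_mul_of_nonneg_left
    (h.energy_le_inv_of_le (t := burgersT₂ σ (burgersD u) Ct) (le_max_right _ _)) hℓ
  have h_error : 2 * (burgersD u ^ 2 * ℓ ^ 2) ≤ ℓ / (8 * burgersD u ^ 2) := by
    rw [le_div_iff₀ (by positivity)]
    linear_combination ℓ * hℓD
  have h_gap : ℓ * (2 * burgersD u ^ 2)⁻¹ - ℓ * (4 * burgersD u ^ 2)⁻¹ =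
      2 * (ℓ / (8 * burgersD u ^ 2)) := by field_simp; ring
  linarith

theorem div_le_mul_integral_sq_increment (h : IsBurgersSolution f σ ν u) (hCt : 0 < Ct)
    (hζ : ∀ y, |y| ≤ burgersD u → |iteratedDeriv 2 f y| ≤ ζ)
    (hE : ∀ t, 0 ≤ t → ν * ∫ x in (0 : ℝ)..1, ∂ₓ u t x ^ 2 ≤ Ct) (hℓ : 0 < ℓ)
    (hℓD : 16 * burgersD u ^ 4 * ℓ ≤ 1) :
    ℓ / (16 * burgersD u ^ 2) ≤ (ζ * burgersD u + ν / ℓ * (16 * burgersD u ^ 2 * Ct *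
        (burgersT₂ σ (burgersD u) Ct - burgersT₁ (burgersD u) Ct))) *
      ∫ t in burgersT₁ (burgersD u) Ct..burgersT₂ σ (burgersD u) Ct,
        ∫ x in (0 : ℝ)..1, (u t (x + ℓ) - u t x) ^ 2 := by
  have hD := h.burgersD_pos
  have hT := burgersT₁_lt_burgersT₂ hD hCt σ
  set T₁ := burgersT₁ (burgersD u) Ct
  set T₂ := burgersT₂ σ (burgersD u) Ct
  have hT_sub := sub_pos.2 hT
  set R := 16 * burgersD u ^ 2 * Ct * (T₂ - T₁) with hR_def
  have hR : 0 < R := by positivity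
  -- The Young parameter `ℓ / R` makes the dissipation cost half of the decay of the correlation.
  have h_cost : ℓ / R * Ct * (T₂ - T₁) = ℓ / (16 * burgersD u ^ 2) := by
    rw [hR_def]; field_simp
  have h_half : ℓ / (8 * burgersD u ^ 2) = 2 * (ℓ / (16 * burgersD u ^ 2)) := by
    field_simp; norm_num
  have h_decay := (h.le_windowCorrelation_sub hCt hE hℓ.le hℓD).trans
    (h.windowCorrelation_sub_le hζ (div_pos hℓ hR) hE (burgersT₁_pos hD hCt).le hT.le ℓ)
  rw [← div_mul] at h_decay
  linarith

theorem mul_min_le_integral_sq_increment (h : IsBurgersSolution f σ ν u) (hCt : 0 < Ct)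
    (hζ : ∀ y, |y| ≤ burgersD u → |iteratedDeriv 2 f y| ≤ ζ)
    (hE : ∀ t, 0 ≤ t → ν * ∫ x in (0 : ℝ)..1, ∂ₓ u t x ^ 2 ≤ Ct) (hℓ : 0 < ℓ)
    (hℓD : 16 * burgersD u ^ 4 * ℓ ≤ 1) :
    ℓ * min 1 (ℓ / ν) ≤ 16 * burgersD u ^ 2 * (ζ * burgersD u + 16 * burgersD u ^ 2 * Ct *
        (burgersT₂ σ (burgersD u) Ct - burgersT₁ (burgersD u) Ct)) *
      ∫ t in burgersT₁ (burgersD u) Ct..burgersT₂ σ (burgersD u) Ct,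
        ∫ x in (0 : ℝ)..1, (u t (x + ℓ) - u t x) ^ 2 := by
  have hD := h.burgersD_pos
  have hν := h.hν
  have hT := burgersT₁_lt_burgersT₂ hD hCt σ
  have h_decay := h.div_le_mul_integral_sq_increment hCt hζ hE hℓ hℓD
  have hζ0 : 0 ≤ ζ := (abs_nonneg _).trans (hζ 0 (by simpa using hD.le))
  set D := burgersD u
  set J := ∫ t in burgersT₁ D Ct..burgersT₂ σ D Ct, ∫ x in (0 : ℝ)..1, (u t (x + ℓ) - u t x) ^ 2
  set R := 16 * D ^ 2 * Ct * (burgersT₂ σ D Ct - burgersT₁ D Ct)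
  have hJ : 0 ≤ J := intervalIntegral.integral_nonneg hT.le fun t _ =>
    intervalIntegral.integral_nonneg zero_le_one fun x _ => sq_nonneg _
  have : 0 ≤ R := mul_nonneg (by positivity) (sub_nonneg.2 hT.le)
  have h_min : min 1 (ℓ / ν) * (ν / ℓ) ≤ 1 := by
    calc min 1 (ℓ / ν) * (ν / ℓ) ≤ ℓ / ν * (ν / ℓ) := by gcongr; exact min_le_right _ _
      _ = 1 := by field_simp
  calc ℓ * min 1 (ℓ / ν) = 16 * D ^ 2 * (ℓ / (16 * D ^ 2)) * min 1 (ℓ / ν) := by field_simp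
    _ ≤ 16 * D ^ 2 * ((ζ * D + ν / ℓ * R) * J) * min 1 (ℓ / ν) := by gcongr
    _ = 16 * D ^ 2 * (ζ * D * min 1 (ℓ / ν) + min 1 (ℓ / ν) * (ν / ℓ) * R) * J := by ring
    _ ≤ 16 * D ^ 2 * (ζ * D * 1 + 1 * R) * J := by gcongr; exact min_le_left _ _
    _ = 16 * D ^ 2 * (ζ * D + R) * J := by rw [mul_one, one_mul]

end IsBurgersSolution

/-- The uniform probability measure on the space-time cell `(T₁, T₂] × (0, 1]`; the structure
function `S_p(ℓ)` is the `p`-th absolute moment of the increment of `u` under it. -/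
noncomputable def spaceTimeMeasure (T₁ T₂ : ℝ) : Measure (ℝ × ℝ) :=
  ProbabilityTheory.cond volume (Ioc T₁ T₂ ×ˢ Ioc 0 1)

section SpaceTimeMeasure

variable {T₁ T₂ : ℝ}

theorem volume_Ioc_prod_Ioc_zero_one (T₁ T₂ : ℝ) :
    volume (Ioc T₁ T₂ ×ˢ Ioc (0 : ℝ) 1) = ENNReal.ofReal (T₂ - T₁) := by
  simp [Measure.volume_eq_prod, Measure.prod_prod]

theorem isProbabilityMeasure_spaceTimeMeasure (hT : T₁ < T₂) :
    IsProbabilityMeasure (spaceTimeMeasure T₁ T₂) :=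
  ProbabilityTheory.cond_isProbabilityMeasure_of_finite
    (by simpa [volume_Ioc_prod_Ioc_zero_one] using hT) (by simp [volume_Ioc_prod_Ioc_zero_one])

theorem ae_spaceTimeMeasure_of_forall {P : ℝ × ℝ → Prop} (hP : ∀ t ∈ Ioc T₁ T₂, ∀ x, P (t, x)) :
    ∀ᵐ q ∂spaceTimeMeasure T₁ T₂, P q :=
  (ProbabilityTheory.ae_cond_mem (measurableSet_Ioc.prod measurableSet_Ioc)).mono
    fun q hq => hP q.1 hq.1 q.2

theorem aestronglyMeasurable_spaceTimeMeasure {w : ℝ → ℝ → ℝ}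
    (hw : ContinuousOn (Function.uncurry w) (Icc T₁ T₂ ×ˢ univ)) :
    AEStronglyMeasurable (Function.uncurry w) (spaceTimeMeasure T₁ T₂) :=
  ((hw.mono (prod_mono Ioc_subset_Icc_self (subset_univ _))).aestronglyMeasurable
    (measurableSet_Ioc.prod measurableSet_Ioc)).smul_measure _

theorem integral_spaceTimeMeasure {w : ℝ → ℝ → ℝ} (hT : T₁ ≤ T₂)
    (hw : ContinuousOn (Function.uncurry w) (Icc T₁ T₂ ×ˢ univ)) :
    ∫ q, Function.uncurry w q ∂spaceTimeMeasure T₁ T₂ =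
      timeAvg T₁ T₂ (fun t => ∫ x in Ioc (0 : ℝ) 1, w t x) := by
  have h_int : IntegrableOn (Function.uncurry w) (Ioc T₁ T₂ ×ˢ Ioc 0 1) (volume.prod volume) :=
    ((hw.mono (prod_mono_right (subset_univ (Icc 0 1)))).integrableOn_compact
      (isCompact_Icc.prod isCompact_Icc)).mono_set
      (prod_mono Ioc_subset_Icc_self Ioc_subset_Icc_self)
  rw [spaceTimeMeasure, ProbabilityTheory.cond, integral_smul_measure,
    volume_Ioc_prod_Ioc_zero_one, Measure.volume_eq_prod, setIntegral_prod _ h_int,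
    ENNReal.toReal_inv, ENNReal.toReal_ofReal (sub_nonneg.2 hT), timeAvg,
    intervalIntegral.integral_of_le hT]
  rfl

end SpaceTimeMeasure

theorem structFun_two (T₁ T₂ ℓ : ℝ) (u : ℝ → ℝ → ℝ) : structFun T₁ T₂ u 2 ℓ =
    (T₂ - T₁)⁻¹ * ∫ t in T₁..T₂, ∫ x in (0 : ℝ)..1, (u t (x + ℓ) - u t x) ^ 2 := by
  simp only [structFun, timeAvg, Real.rpow_two, sq_abs, intervalIntegral.integral_of_le zero_le_one]

namespace IsBurgersSolution

variable {f : ℝ → ℝ} {σ ν t ℓ : ℝ} {u : ℝ → ℝ → ℝ}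

theorem increment_le (h : IsBurgersSolution f σ ν u) (ht : 0 ≤ t) (hℓ : 0 ≤ ℓ) (x : ℝ) :
    u t (x + ℓ) - u t x ≤ burgersD u * ℓ := by
  simpa using image_sub_le_mul_sub_of_deriv_le
    (fun y => (h.hasDerivAt_space ht y).differentiableAt) (h.dx_le_burgersD ht)
    (le_add_of_nonneg_right hℓ : x ≤ x + ℓ)

theorem abs_increment_le (h : IsBurgersSolution f σ ν u) {F : ℝ} (hν : ν ≤ 1)
    (hF : ∀ y, |y| ≤ burgersD u → |f y| ≤ F) (ht : 0 ≤ t) (hℓ : 0 ≤ ℓ) (x : ℝ) :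
    |u t (x + ℓ) - u t x| ≤ 2 * (burgersD u + F) * min 1 (ℓ / ν) := by
  have hD := h.burgersD_pos
  have hF0 : 0 ≤ F := (abs_nonneg _).trans (hF 0 (by simpa using hD.le))
  have h_dx (y : ℝ) : ‖∂ₓ u t y‖ ≤ 2 * (burgersD u + F) / ν := by
    rw [le_div_iff₀' h.hν, Real.norm_eq_abs]
    linarith [h.mul_abs_dx_le hF ht y, mul_le_of_le_one_left hD.le hν]
  have h_lip := convex_univ.norm_image_sub_le_of_norm_hasDerivWithin_le
    (fun y _ => (h.hasDerivAt_space ht y).hasDerivWithinAt) (fun y _ => h_dx y)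
    (mem_univ x) (mem_univ (x + ℓ))
  rw [add_sub_cancel_left, Real.norm_eq_abs, Real.norm_of_nonneg hℓ] at h_lip
  rw [mul_min_of_nonneg _ _ (by positivity), mul_one, mul_div_left_comm, mul_comm ℓ]
  refine le_min ?_ h_lip
  linarith [abs_sub (u t (x + ℓ)) (u t x), h.abs_le_burgersD ht x, h.abs_le_burgersD ht (x + ℓ)]

theorem setIntegral_increment (h : IsBurgersSolution f σ ν u) (ht : 0 ≤ t) (ℓ : ℝ) :
    ∫ x in Ioc (0 : ℝ) 1, (u t (x + ℓ) - u t x) = 0 := by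
  have hu := continuous_slice h.hu.continuousOn ht
  rw [← intervalIntegral.integral_of_le zero_le_one,
    intervalIntegral.integral_sub (Continuous.intervalIntegrable (by fun_prop) _ _)
      (Continuous.intervalIntegrable (by fun_prop) _ _),
    intervalIntegral_comp_add_right_of_periodic (h.hper t), sub_self]

variable {T₁ T₂ A B θ p : ℝ}

theorem continuousOn_increment_Icc (h : IsBurgersSolution f σ ν u) (hT₁ : 0 ≤ T₁) (ℓ : ℝ) :
    ContinuousOn (Function.uncurry fun t x => u t (x + ℓ) - u t x) (Icc T₁ T₂ ×ˢ univ) :=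
  (continuousOn_increment h.hu.continuousOn ℓ).mono
    (prod_mono_left fun _ ht => hT₁.trans ht.1)

theorem structFun_eq_integral (h : IsBurgersSolution f σ ν u) (hT₁ : 0 ≤ T₁) (hT : T₁ ≤ T₂)
    (hp : 0 ≤ p) (ℓ : ℝ) : structFun T₁ T₂ u p ℓ =
      ∫ q, |Function.uncurry (fun t x => u t (x + ℓ) - u t x) q| ^ p ∂spaceTimeMeasure T₁ T₂ :=
  (integral_spaceTimeMeasure (w := fun t x => |u t (x + ℓ) - u t x| ^ p) hT
    ((h.continuousOn_increment_Icc hT₁ ℓ).abs.rpow_const fun _ _ => .inr hp)).symm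

theorem integral_increment_spaceTimeMeasure (h : IsBurgersSolution f σ ν u) (hT₁ : 0 ≤ T₁)
    (hT : T₁ ≤ T₂) (ℓ : ℝ) :
    ∫ q, Function.uncurry (fun t x => u t (x + ℓ) - u t x) q ∂spaceTimeMeasure T₁ T₂ = 0 := by
  rw [integral_spaceTimeMeasure hT (h.continuousOn_increment_Icc hT₁ ℓ), timeAvg,
    intervalIntegral.integral_congr (g := fun _ => 0), intervalIntegral.integral_zero, mul_zero]
  intro t ht
  rw [uIcc_of_le hT] at ht
  exact h.setIntegral_increment (hT₁.trans ht.1) ℓ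

theorem structFun_bounds (h : IsBurgersSolution f σ ν u) (hT₁ : 0 ≤ T₁) (hT : T₁ < T₂)
    (hA : 0 < A) (hB : 0 < B) (hθ : 0 < θ)
    (hδA : ∀ t, 0 ≤ t → ∀ x, u t (x + ℓ) - u t x ≤ A)
    (hδB : ∀ t, 0 ≤ t → ∀ x, |u t (x + ℓ) - u t x| ≤ B)
    (hsq : θ * (A * B) ≤ structFun T₁ T₂ u 2 ℓ) (hp : 0 ≤ p) :
    (p ≤ 1 → θ / 2 * A ^ p ≤ structFun T₁ T₂ u p ℓ ∧ structFun T₁ T₂ u p ℓ ≤ (2 * A) ^ p) ∧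
    (1 ≤ p → θ / 2 / ((θ / 4) ^ (2 - p) + 1) * (A * B ^ (p - 1)) ≤ structFun T₁ T₂ u p ℓ ∧
      structFun T₁ T₂ u p ℓ ≤ 2 * (A * B ^ (p - 1))) := by
  have := isProbabilityMeasure_spaceTimeMeasure hT
  have hX := aestronglyMeasurable_spaceTimeMeasure (h.continuousOn_increment_Icc (T₂ := T₂) hT₁ ℓ)
  have hmean := h.integral_increment_spaceTimeMeasure hT₁ hT.le ℓ
  have hXA : ∀ᵐ q ∂spaceTimeMeasure T₁ T₂,
      Function.uncurry (fun t x => u t (x + ℓ) - u t x) q ≤ A :=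
    ae_spaceTimeMeasure_of_forall fun t ht x => hδA t (hT₁.trans ht.1.le) x
  have hXB : ∀ᵐ q ∂spaceTimeMeasure T₁ T₂,
      |Function.uncurry (fun t x => u t (x + ℓ) - u t x) q| ≤ B :=
    ae_spaceTimeMeasure_of_forall fun t ht x => hδB t (hT₁.trans ht.1.le) x
  rw [h.structFun_eq_integral hT₁ hT.le zero_le_two] at hsq
  simp only [Real.rpow_two, sq_abs] at hsq
  rw [h.structFun_eq_integral hT₁ hT.le hp]
  exact ⟨fun hp1 => ⟨mul_rpow_le_integral_abs_rpow hA hB hX hXB hmean hXA hsq hp hp1,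
    integral_abs_rpow_le_two_mul_rpow hX hXB hmean hXA hp hp1⟩,
    fun hp1 => ⟨mul_mul_rpow_le_integral_abs_rpow hθ hB hX hXB hmean hXA hsq hp1,
    integral_abs_rpow_le_two_mul_mul_rpow hB.le hX hXB hmean hXA hp1⟩⟩

end IsBurgersSolution

/-- The common size of `S_p(ℓ)` in both ranges: with the inertial and dissipation ranges separated
by `ℓ = ν`, it is `ℓ ^ p` for `p ≤ 1`, and for `1 ≤ p` it equals `ℓ` if `ν ≤ ℓ` and
`ℓ ^ p * ν ^ (-(p - 1))` if `ℓ ≤ ν`. -/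
noncomputable def structScale (ν p ℓ : ℝ) : ℝ := ℓ ^ min p 1 * min 1 (ℓ / ν) ^ max (p - 1) 0

section StructScale

variable {ν p ℓ : ℝ}

theorem structScale_of_le_one (hp : p ≤ 1) : structScale ν p ℓ = ℓ ^ p := by
  rw [structScale, min_eq_left hp, max_eq_right (sub_nonpos.2 hp), Real.rpow_zero, mul_one]

theorem structScale_of_one_le (hp : 1 ≤ p) :
    structScale ν p ℓ = ℓ * min 1 (ℓ / ν) ^ (p - 1) := by
  rw [structScale, min_eq_right hp, max_eq_left (sub_nonneg.2 hp), Real.rpow_one]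

theorem structScale_inertial (hp : 1 ≤ p) (hν : 0 < ν) (hℓ : ν ≤ ℓ) : structScale ν p ℓ = ℓ := by
  rw [structScale_of_one_le hp, min_eq_left ((one_le_div hν).2 hℓ), Real.one_rpow, mul_one]

theorem structScale_dissipation (hp : 1 ≤ p) (hℓ : 0 < ℓ) (hν : ℓ ≤ ν) :
    structScale ν p ℓ = ℓ ^ p * ν ^ (-(p - 1)) := by
  have hν0 : 0 < ν := hℓ.trans_le hν
  rw [structScale_of_one_le hp, min_eq_right ((div_le_one hν0).2 hν),
    Real.div_rpow hℓ.le hν0.le, Real.rpow_neg hν0.le, Real.rpow_sub_one hℓ.ne']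
  field_simp

end StructScale

theorem exists_mul_structScale_le_structFun_le {D K κ p : ℝ} (hD : 0 < D) (hK : 0 < K)
    (hκ : 0 < κ) (hp : 0 ≤ p) :
    ∃ c > 0, ∃ C > 0, ∀ {f σ ν u T₁ T₂ ℓ}, IsBurgersSolution f σ ν u → 0 ≤ T₁ → T₁ < T₂ → 0 < ℓ →
      (∀ t, 0 ≤ t → ∀ x, u t (x + ℓ) - u t x ≤ D * ℓ) →
      (∀ t, 0 ≤ t → ∀ x, |u t (x + ℓ) - u t x| ≤ K * min 1 (ℓ / ν)) →
      κ * (ℓ * min 1 (ℓ / ν)) ≤ structFun T₁ T₂ u 2 ℓ →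
      c * structScale ν p ℓ ≤ structFun T₁ T₂ u p ℓ ∧
        structFun T₁ T₂ u p ℓ ≤ C * structScale ν p ℓ := by
  set θ := κ / (D * K) with hθ_def
  have hθ : 0 < θ := by positivity
  have h_sq (ℓ m : ℝ) : κ * (ℓ * m) = θ * (D * ℓ * (K * m)) := by rw [hθ_def]; field_simp
  rcases le_total p 1 with hp1 | hp1
  · refine ⟨θ / 2 * D ^ p, by positivity, (2 * D) ^ p, by positivity, ?_⟩
    intro f σ ν u T₁ T₂ ℓ h hT₁ hT hℓ hδD hδK h_two
    have hν := h.hν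
    have h_bounds := (h.structFun_bounds hT₁ hT (by positivity) (by positivity) hθ hδD hδK
      (h_sq _ _ ▸ h_two) hp).1 hp1
    rw [Real.mul_rpow hD.le hℓ.le, ← mul_assoc, ← mul_assoc,
      Real.mul_rpow (by positivity) hℓ.le] at h_bounds
    rwa [structScale_of_le_one hp1]
  · refine ⟨θ / 2 / ((θ / 4) ^ (2 - p) + 1) * (D * K ^ (p - 1)), by positivity,
      2 * (D * K ^ (p - 1)), by positivity, ?_⟩
    intro f σ ν u T₁ T₂ ℓ h hT₁ hT hℓ hδD hδK h_two
    have hν := h.hν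
    have h_bounds := (h.structFun_bounds hT₁ hT (by positivity) (by positivity) hθ hδD hδK
      (h_sq _ _ ▸ h_two) hp).2 hp1
    have h_scale : D * ℓ * (K * min 1 (ℓ / ν)) ^ (p - 1) =
        D * K ^ (p - 1) * structScale ν p ℓ := by
      rw [structScale_of_one_le hp1, Real.mul_rpow hK.le (by positivity)]; ring
    rwa [h_scale, ← mul_assoc, ← mul_assoc 2] at h_bounds

section UniformBounds

variable {f : ℝ → ℝ} {D Ct p : ℝ}

theorem exists_mul_min_le_structFun_two (hf : ContDiff ℝ 2 f) (hD : 0 < D) (hCt : 0 < Ct) (σ : ℝ) :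
    ∃ κ > 0, ∀ ν u, IsBurgersSolution f σ ν u → burgersD u = D →
      (∀ t, 0 ≤ t → ν * ∫ x in (0 : ℝ)..1, ∂ₓ u t x ^ 2 ≤ Ct) →
      ∀ ℓ, 0 < ℓ → 16 * D ^ 4 * ℓ ≤ 1 →
        κ * (ℓ * min 1 (ℓ / ν)) ≤ structFun (burgersT₁ D Ct) (burgersT₂ σ D Ct) u 2 ℓ := by
  obtain ⟨ζ, hζ⟩ := isCompact_Icc.exists_bound_of_continuousOn
    (hf.continuous_iteratedDeriv 2 le_rfl).continuousOn (s := Icc (-D) D)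
  have hζ0 : 0 ≤ ζ := (norm_nonneg _).trans (hζ 0 (by simp [hD.le]))
  have hT := sub_pos.2 (burgersT₁_lt_burgersT₂ hD hCt σ)
  set T := burgersT₂ σ D Ct - burgersT₁ D Ct
  have hP : 0 < 16 * D ^ 2 * (ζ * D + 16 * D ^ 2 * Ct * T) := by positivity
  refine ⟨T⁻¹ * (16 * D ^ 2 * (ζ * D + 16 * D ^ 2 * Ct * T))⁻¹, by positivity, ?_⟩
  rintro ν u h rfl hE ℓ hℓ hℓD
  rw [structFun_two, mul_assoc]
  refine mul_le_mul_of_nonneg_left ((inv_mul_le_iff₀ hP).2 ?_) (inv_pos.2 hT).le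
  exact h.mul_min_le_integral_sq_increment hCt (fun y hy => hζ y (abs_le.1 hy)) hE hℓ hℓD

theorem exists_structFun_bounds (f : ℝ → ℝ) (σ D : ℝ) (hCt : 0 < Ct) (hp : 0 ≤ p) :
    ∃ c > 0, ∃ C > 0, ∀ ν u, IsBurgersSolution f σ ν u → ν ≤ 1 → burgersD u = D →
      (∀ t, 0 ≤ t → sobLp 1 2 (u t) ^ 2 ≤ Ct * ν⁻¹) → ∀ ℓ, 0 < ℓ → 16 * D ^ 4 * ℓ ≤ 1 →
        c * structScale ν p ℓ ≤ structFun (burgersT₁ D Ct) (burgersT₂ σ D Ct) u p ℓ ∧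
        structFun (burgersT₁ D Ct) (burgersT₂ σ D Ct) u p ℓ ≤ C * structScale ν p ℓ := by
  by_cases h_exists : ∃ ν u, IsBurgersSolution f σ ν u ∧ burgersD u = D
  swap
  · exact ⟨1, one_pos, 1, one_pos, fun ν u h _ hDu => absurd ⟨ν, u, h, hDu⟩ h_exists⟩
  obtain ⟨ν₁, u₁, h₁, hDu₁⟩ := h_exists
  have hf : ContDiff ℝ 2 f := contDiff_infty.1 h₁.hf 2
  have hD : 0 < D := hDu₁ ▸ h₁.burgersD_pos
  obtain ⟨F, hF⟩ := isCompact_Icc.exists_bound_of_continuousOn hf.continuous.continuousOn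
    (s := Icc (-D) D)
  have hF0 : 0 ≤ F := (norm_nonneg _).trans (hF 0 (by simp [hD.le]))
  obtain ⟨κ, hκ, h_two⟩ := exists_mul_min_le_structFun_two hf hD hCt σ
  obtain ⟨c, hc, C, hC, h_bounds⟩ := exists_mul_structScale_le_structFun_le hD
    (by positivity : 0 < 2 * (D + F)) hκ hp
  refine ⟨c, hc, C, hC, ?_⟩
  rintro ν u h hν rfl hE ℓ hℓ hℓD
  exact h_bounds h (burgersT₁_pos hD hCt).le (burgersT₁_lt_burgersT₂ hD hCt σ) hℓ
    (fun t ht => h.increment_le ht hℓ.le)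
    (fun t ht => h.abs_increment_le hν (fun y hy => hF y (abs_le.1 hy)) ht hℓ.le)
    (h_two ν u h rfl (fun t ht => h.mul_integral_sq_dx_le ht (hE t ht)) ℓ hℓ hℓD)

end UniformBounds

/-- There exist `ν₀ ∈ (0,1]`, `C₁ > 0`, `C₂ ∈ (C₁ν₀,1)` and, for
each `p ≥ 0`, constants `c(p), C(p) > 0` such that for every `ν ∈ (0,ν₀]`: for
`ℓ` in the inertial range `(C₁ν, C₂]`, `S_p(ℓ) ∼ ℓ^p` if `0 ≤ p ≤ 1` and
`S_p(ℓ) ∼ ℓ` if `p ≥ 1`; and for `ℓ` in the dissipation range `(0, C₁ν]`,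
`S_p(ℓ) ∼ ℓ^p` if `0 ≤ p ≤ 1` and `S_p(ℓ) ∼ ℓ^p ν^{-(p-1)}` if `p ≥ 1`. -/
theorem statement18 (f : ℝ → ℝ) (σ D Ct : ℝ) (hCt : 0 < Ct)
    (hCtb : ∀ ν, 0 < ν → ν ≤ 1 →
      ∀ u : ℝ → ℝ → ℝ, IsBurgersSolution f σ ν u → burgersD u = D →
        ∀ t, 0 ≤ t → sobLp 1 2 (u t) ^ 2 ≤ Ct * ν⁻¹) :
    ∃ ν₀ C₁ C₂ : ℝ, (0 < ν₀ ∧ ν₀ ≤ 1) ∧ 0 < C₁ ∧ (C₁ * ν₀ < C₂ ∧ C₂ < 1) ∧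
      ∀ p : ℝ, 0 ≤ p → ∃ c > 0, ∃ C > 0,
        ∀ ν, 0 < ν → ν ≤ ν₀ →
          ∀ u : ℝ → ℝ → ℝ, IsBurgersSolution f σ ν u → burgersD u = D →
            (∀ ℓ, C₁ * ν < ℓ → ℓ ≤ C₂ →
              (p ≤ 1 →
                c * ℓ ^ p
                  ≤ structFun (burgersT₁ D Ct) (burgersT₂ σ D Ct) u p ℓ ∧
                structFun (burgersT₁ D Ct) (burgersT₂ σ D Ct) u p ℓ
                  ≤ C * ℓ ^ p) ∧
              (1 ≤ p →
                c * ℓ ≤ structFun (burgersT₁ D Ct) (burgersT₂ σ D Ct) u p ℓ ∧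
                structFun (burgersT₁ D Ct) (burgersT₂ σ D Ct) u p ℓ ≤ C * ℓ)) ∧
            (∀ ℓ, 0 < ℓ → ℓ ≤ C₁ * ν →
              (p ≤ 1 →
                c * ℓ ^ p
                  ≤ structFun (burgersT₁ D Ct) (burgersT₂ σ D Ct) u p ℓ ∧
                structFun (burgersT₁ D Ct) (burgersT₂ σ D Ct) u p ℓ
                  ≤ C * ℓ ^ p) ∧
              (1 ≤ p →
                c * (ℓ ^ p * ν ^ (-(p - 1)))
                  ≤ structFun (burgersT₁ D Ct) (burgersT₂ σ D Ct) u p ℓ ∧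
                structFun (burgersT₁ D Ct) (burgersT₂ σ D Ct) u p ℓ
                  ≤ C * (ℓ ^ p * ν ^ (-(p - 1))))) := by
  set C₂ := min (1 / 2) (1 / (16 * D ^ 4 + 1))
  have hC₂ : 0 < C₂ := by positivity
  have hC₂_half : C₂ ≤ 1 / 2 := min_le_left _ _
  have hC₂D : (16 * D ^ 4 + 1) * C₂ ≤ 1 := (le_div_iff₀' (by positivity)).1 (min_le_right _ _)
  refine ⟨C₂ / 2, 1, C₂, ⟨by positivity, by linarith⟩, one_pos, ⟨by linarith, by linarith⟩, ?_⟩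
  intro p hp
  obtain ⟨c, hc, C, hC, h_bounds⟩ := exists_structFun_bounds f σ D hCt hp
  refine ⟨c, hc, C, hC, fun ν hν hνC₂ u h hDu => ?_⟩
  have h_bounds (ℓ) (hℓ : 0 < ℓ) (hℓC₂ : ℓ ≤ C₂) := h_bounds ν u h (by linarith) hDu
    (hCtb ν hν (by linarith) u h hDu) ℓ hℓ
    (by linarith [mul_le_mul_of_nonneg_left hℓC₂ (by positivity : 0 ≤ 16 * D ^ 4)])
  simp only [one_mul]
  refine ⟨fun ℓ hνℓ hℓ => ?_, fun ℓ hℓ hℓν => ?_⟩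
  · have h_inertial := h_bounds ℓ (hν.trans hνℓ) hℓ
    exact ⟨fun hp => by rwa [structScale_of_le_one hp] at h_inertial,
      fun hp => by rwa [structScale_inertial hp hν hνℓ.le] at h_inertial⟩
  · have h_dissipation := h_bounds ℓ hℓ (by linarith)
    exact ⟨fun hp => by rwa [structScale_of_le_one hp] at h_dissipation,
      fun hp => by rwa [structScale_dissipation hp hℓ hℓν] at h_dissipation⟩
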